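/- arXiv:1210.5165 — 2 statements merged into one kernel-verified Lean document; each statement's English description precedes it below -/
import Mathlib

section
/- Let K ⊂ 𝕏² be measurable, let j ∈ {0,…,n−1} and let 𝓐' ∈ 𝓕_j = σ(X_0,…,X_j). Then E[ ( ∑_{i=j}^{n−1} ( 1_K(X_i,X_{i+1}) − E[1_K(X_i,X_{i+1}) | X_i] ) )² / ( ∑_{i=j}^{n−1} E[1_K(X_i,X_{i+1}) | X_i] ) · 1_{𝓐'} ] ≤ ∑_{k=j}^{n−1} E[ E[1_K(X_k,X_{k+1}) | X_k] / ( ∑_{i=j}^{k} E[1_K(X_i,X_{i+1}) | X_i] ) · 1_{𝓐'} ], with the convention 0/0 = 0 inside the expectations. -/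
/-! The inequality is a martingale estimate. Write `ξ_i = 1_K(X_i, X_{i+1}) - D_i`,
`M_k = ∑_{j ≤ i < k} ξ_i` and `S_k = ∑_{j ≤ i < k} D_i`. Since `S_{k+1}` and `M_k` are both
`𝓕_k`-measurable and `E[ξ_k | 𝓕_k] = 0`, expanding the square `M_{k+1}² = (M_k + ξ_k)²` gives
`E[M_{k+1}² / S_{k+1}] = E[M_k² / S_{k+1}] + E[(D_k - D_k²) / S_{k+1}]`, and the first term is at
most `E[M_k² / S_k]` because `S` is nondecreasing; now induct on `k`.

To make every integrand bounded and to avoid the convention `0 / 0 = 0`, the induction is run with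
denominators `S_k + ε`, `ε > 0` (`integral_sq_div_add_le`), and `ε` is then sent to `0` by
dominated convergence (`integral_sq_div_le`). The relation `E[1_K(X_i, X_{i+1}) | 𝓕_i] = D_i` is
assumed only for functions of `X_{i+1}`; it extends to measurable `K ⊆ 𝕏²` because finite measures
on a product agree once they agree on rectangles (`condExp_indicator_pair`). -/

open MeasureTheory Real
open scoped ENNReal

/-! ### Bounded measurable functions -/

/-- A bounded function that is measurable with respect to the σ-algebra `m`. -/
def BddMeas {Ω : Type*} (m : MeasurableSpace Ω) (f : Ω → ℝ) : Prop :=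
  StronglyMeasurable[m] f ∧ ∃ C : ℝ, ∀ ω, |f ω| ≤ C

namespace BddMeas

variable {Ω : Type*} {m m' : MeasurableSpace Ω} {f g : Ω → ℝ}

lemma mono (hf : BddMeas m f) (h : m ≤ m') : BddMeas m' f := ⟨hf.1.mono h, hf.2⟩

lemma const (c : ℝ) : BddMeas m (fun _ => c) := ⟨stronglyMeasurable_const, |c|, fun _ => le_rfl⟩

lemma add (hf : BddMeas m f) (hg : BddMeas m g) : BddMeas m (fun ω => f ω + g ω) := by
  obtain ⟨hf, C, hC⟩ := hf
  obtain ⟨hg, D, hD⟩ := hg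
  exact ⟨hf.add hg, C + D, fun ω => (abs_add_le _ _).trans (add_le_add (hC ω) (hD ω))⟩

lemma mul (hf : BddMeas m f) (hg : BddMeas m g) : BddMeas m (fun ω => f ω * g ω) := by
  obtain ⟨hf, C, hC⟩ := hf
  obtain ⟨hg, D, hD⟩ := hg
  refine ⟨hf.mul hg, C * D, fun ω => ?_⟩
  rw [abs_mul]
  exact mul_le_mul (hC ω) (hD ω) (abs_nonneg _) ((abs_nonneg _).trans (hC ω))

lemma sub (hf : BddMeas m f) (hg : BddMeas m g) : BddMeas m (fun ω => f ω - g ω) := by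
  simpa [sub_eq_add_neg] using hf.add ((const (-1)).mul hg)

lemma sum {ι : Type*} {t : Finset ι} {F : ι → Ω → ℝ} (h : ∀ i ∈ t, BddMeas m (F i)) :
    BddMeas m (fun ω => ∑ i ∈ t, F i ω) := by
  classical
  induction t using Finset.induction_on with
  | empty => simpa using const (m := m) 0
  | insert a t ha ih =>
    simp only [Finset.sum_insert ha]
    exact (h a (by simp)).add (ih fun i hi => h i (by simp [hi]))

lemma inv_add (hf : BddMeas m f) (h0 : ∀ ω, 0 ≤ f ω) {ε : ℝ} (hε : 0 < ε) :
    BddMeas m (fun ω => (f ω + ε)⁻¹) := by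
  refine ⟨(hf.1.measurable.add_const ε).inv.stronglyMeasurable, ε⁻¹, fun ω => ?_⟩
  have := h0 ω
  rw [abs_of_nonneg (by positivity)]
  exact inv_anti₀ hε (by linarith)

lemma indicator_one {A : Set Ω} (hA : MeasurableSet[m] A) :
    BddMeas m (A.indicator fun _ => (1 : ℝ)) := by
  refine ⟨stronglyMeasurable_const.indicator hA, 1, fun ω => ?_⟩
  by_cases h : ω ∈ A <;> simp [h]

lemma integrable [mΩ : MeasurableSpace Ω] (hf : BddMeas mΩ f) (P : Measure Ω)
    [IsFiniteMeasure P] : Integrable f P := by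
  obtain ⟨hf, C, hC⟩ := hf
  exact Integrable.of_bound hf.aestronglyMeasurable C (Filter.Eventually.of_forall hC)

end BddMeas

/-! ### The martingale inequality -/

/-- Orthogonality of a martingale increment `Y - E[Y | m]` to bounded `m`-measurable functions. -/
lemma integral_mul_sub_eq_zero {Ω : Type*} {m : MeasurableSpace Ω} [mΩ : MeasurableSpace Ω]
    (P : Measure Ω) [IsProbabilityMeasure P] (hm : m ≤ mΩ) {Y D Z : Ω → ℝ}
    (hY : BddMeas mΩ Y) (hD : BddMeas m D) (hYD : P[Y | m] =ᵐ[P] D) (hZ : BddMeas m Z) :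
    ∫ ω, Z ω * (Y ω - D ω) ∂P = 0 := by
  have hZY := (((hZ.mono hm).mul hY).integrable P)
  have hZD := (((hZ.mono hm).mul (hD.mono hm)).integrable P)
  have h1 : P[Z * Y | m] =ᵐ[P] Z * D :=
    (condExp_mul_of_stronglyMeasurable_left hZ.1 hZY (hY.integrable P)).trans
      (by filter_upwards [hYD] with ω h; simp [h])
  have h2 : ∫ ω, Z ω * Y ω ∂P = ∫ ω, Z ω * D ω ∂P := by
    have := integral_condExp (μ := P) hm (f := Z * Y)
    rw [integral_congr_ae h1] at this
    exact this.symm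
  simp_rw [mul_sub]
  rw [integral_sub hZY hZD, h2, sub_self]

/-- The martingale inequality with denominators regularised by `ε > 0`, for an adapted sequence of
`{0,1}`-valued variables `Y i` with conditional expectations `D i`. -/
lemma integral_sq_div_add_le {Ω : Type*} [mΩ : MeasurableSpace Ω] (P : Measure Ω)
    [IsProbabilityMeasure P] (m : ℕ → MeasurableSpace Ω) (hm : ∀ i, m i ≤ mΩ) (hmono : Monotone m)
    (n j : ℕ) (Y D : ℕ → Ω → ℝ) (hY : ∀ i, BddMeas (m (i + 1)) (Y i))
    (hY2 : ∀ i ω, Y i ω ^ 2 = Y i ω) (hD : ∀ i, BddMeas (m i) (D i)) (hD0 : ∀ i ω, 0 ≤ D i ω)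
    (hYD : ∀ i < n, P[Y i | m i] =ᵐ[P] D i) {A : Set Ω} (hA : MeasurableSet[m j] A)
    {ε : ℝ} (hε : 0 < ε) (k : ℕ) (hjk : j ≤ k) (hkn : k ≤ n) :
    ∫ ω, (∑ i ∈ Finset.Ico j k, (Y i ω - D i ω)) ^ 2 * (∑ i ∈ Finset.Ico j k, D i ω + ε)⁻¹
        * A.indicator (fun _ => (1 : ℝ)) ω ∂P
      ≤ ∑ l ∈ Finset.Ico j k, ∫ ω, D l ω * (∑ i ∈ Finset.Ico j (l + 1), D i ω + ε)⁻¹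
        * A.indicator (fun _ => (1 : ℝ)) ω ∂P := by
  induction k, hjk using Nat.le_induction with
  | base => simp
  | succ k hjk ih =>
    specialize ih (by omega)
    have hS0 : ∀ l ω, 0 ≤ ∑ i ∈ Finset.Ico j l, D i ω :=
      fun l ω => Finset.sum_nonneg fun i _ => hD0 i ω
    have hM : BddMeas (m k) (fun ω => ∑ i ∈ Finset.Ico j k, (Y i ω - D i ω)) := by
      refine BddMeas.sum fun i hi => ?_
      rw [Finset.mem_Ico] at hi
      exact ((hY i).mono (hmono (by omega))).sub ((hD i).mono (hmono (by omega)))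
    have hS : ∀ l, l ≤ k + 1 → BddMeas (m k) (fun ω => ∑ i ∈ Finset.Ico j l, D i ω) := by
      refine fun l hl => BddMeas.sum fun i hi => ?_
      rw [Finset.mem_Ico] at hi
      exact (hD i).mono (hmono (by omega))
    have hI : BddMeas (m k) (A.indicator fun _ => (1 : ℝ)) :=
      BddMeas.indicator_one (hmono hjk _ hA)
    have hI0 : ∀ ω, 0 ≤ A.indicator (fun _ => (1 : ℝ)) ω :=
      fun ω => Set.indicator_nonneg (fun _ _ => zero_le_one) ω
    set M : Ω → ℝ := fun ω => ∑ i ∈ Finset.Ico j k, (Y i ω - D i ω) with hMdef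
    set W : Ω → ℝ := fun ω => (∑ i ∈ Finset.Ico j (k + 1), D i ω + ε)⁻¹
        * A.indicator (fun _ => (1 : ℝ)) ω with hWdef
    have hW : BddMeas (m k) W := ((hS (k + 1) le_rfl).inv_add (hS0 _) hε).mul hI
    have hW0 : ∀ ω, 0 ≤ W ω := fun ω =>
      mul_nonneg (inv_nonneg.2 (by linarith [hS0 (k + 1) ω])) (hI0 ω)
    -- The coefficient of `ξ = Y k - D k` after reducing `ξ² = (1 - 2 D k) ξ + D k - (D k)²`.
    have hZ : BddMeas (m k) (fun ω => (2 * M ω + 1 - 2 * D k ω) * W ω) :=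
      ((((BddMeas.const 2).mul hM).add (BddMeas.const 1)).sub
        ((BddMeas.const 2).mul (hD k))).mul hW
    have horth := integral_mul_sub_eq_zero P (hm k) ((hY k).mono (hm _)) (hD k)
      (hYD k (by omega)) hZ
    have i1 : Integrable (fun ω => M ω * M ω * W ω) P :=
      (((hM.mul hM).mul hW).mono (hm k)).integrable P
    have i2 : Integrable (fun ω => (2 * M ω + 1 - 2 * D k ω) * W ω * (Y k ω - D k ω)) P :=
      ((hZ.mono (hm k)).mul (((hY k).mono (hm _)).sub ((hD k).mono (hm k)))).integrable P
    have i3 : Integrable (fun ω => (D k ω - D k ω * D k ω) * W ω) P :=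
      ((((hD k).sub ((hD k).mul (hD k))).mul hW).mono (hm k)).integrable P
    have i4 : Integrable (fun ω => D k ω * W ω) P :=
      (((hD k).mul hW).mono (hm k)).integrable P
    have i5 : Integrable (fun ω => M ω ^ 2 * (∑ i ∈ Finset.Ico j k, D i ω + ε)⁻¹
        * A.indicator (fun _ => (1 : ℝ)) ω) P := by
      simp_rw [pow_two]
      exact ((((hM.mul hM).mul ((hS k (by omega)).inv_add (hS0 _) hε)).mul hI).mono
        (hm k)).integrable P
    have hexp : ∀ ω, (∑ i ∈ Finset.Ico j (k + 1), (Y i ω - D i ω)) ^ 2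
          * (∑ i ∈ Finset.Ico j (k + 1), D i ω + ε)⁻¹ * A.indicator (fun _ => (1 : ℝ)) ω
        = M ω * M ω * W ω + (2 * M ω + 1 - 2 * D k ω) * W ω * (Y k ω - D k ω)
          + (D k ω - D k ω * D k ω) * W ω := by
      intro ω
      rw [Finset.sum_Ico_succ_top hjk (fun i => Y i ω - D i ω), mul_assoc]
      change (M ω + _) ^ 2 * W ω = _
      linear_combination W ω * hY2 k ω
    rw [Finset.sum_Ico_succ_top hjk, integral_congr_ae (Filter.Eventually.of_forall hexp),
      integral_add (f := fun ω => M ω * M ω * W ω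
        + (2 * M ω + 1 - 2 * D k ω) * W ω * (Y k ω - D k ω)) (i1.add i2) i3,
      integral_add i1 i2, horth, add_zero]
    refine add_le_add (le_trans (integral_mono i1 i5 fun ω => ?_) ih) ?_
    · simp only [hWdef]
      rw [← mul_assoc, ← pow_two]
      refine mul_le_mul_of_nonneg_right (mul_le_mul_of_nonneg_left
        (inv_anti₀ (by linarith [hS0 k ω]) ?_) (sq_nonneg _)) (hI0 ω)
      rw [Finset.sum_Ico_succ_top hjk]
      linarith [hD0 k ω]
    · simp_rw [mul_assoc]
      exact integral_mono i3 i4 fun ω =>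
        mul_le_mul_of_nonneg_right (by nlinarith [sq_nonneg (D k ω)]) (hW0 ω)

/-- The martingale inequality for an adapted sequence of `{0,1}`-valued variables `Y i` with
conditional expectations `D i`. The left-hand integrand need not be bounded; if it fails to be
integrable, its Bochner integral is `0` and the bound is trivial. -/
lemma integral_sq_div_le {Ω : Type*} [mΩ : MeasurableSpace Ω] (P : Measure Ω)
    [IsProbabilityMeasure P] (m : ℕ → MeasurableSpace Ω) (hm : ∀ i, m i ≤ mΩ) (hmono : Monotone m)
    (n j : ℕ) (hjn : j ≤ n) (Y D : ℕ → Ω → ℝ) (hY : ∀ i, BddMeas (m (i + 1)) (Y i))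
    (hY2 : ∀ i ω, Y i ω ^ 2 = Y i ω) (hD : ∀ i, BddMeas (m i) (D i)) (hD0 : ∀ i ω, 0 ≤ D i ω)
    (hYD : ∀ i < n, P[Y i | m i] =ᵐ[P] D i) {A : Set Ω} (hA : MeasurableSet[m j] A) :
    ∫ ω, (∑ i ∈ Finset.Ico j n, (Y i ω - D i ω)) ^ 2 / (∑ i ∈ Finset.Ico j n, D i ω)
        * A.indicator (fun _ => (1 : ℝ)) ω ∂P
      ≤ ∑ l ∈ Finset.Ico j n, ∫ ω, D l ω / (∑ i ∈ Finset.Ico j (l + 1), D i ω)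
        * A.indicator (fun _ => (1 : ℝ)) ω ∂P := by
  have hS0 : ∀ l ω, 0 ≤ ∑ i ∈ Finset.Ico j l, D i ω :=
    fun l ω => Finset.sum_nonneg fun i _ => hD0 i ω
  have hI : BddMeas mΩ (A.indicator fun _ => (1 : ℝ)) := BddMeas.indicator_one (hm j _ hA)
  have hI0 : ∀ ω, 0 ≤ A.indicator (fun _ => (1 : ℝ)) ω :=
    fun ω => Set.indicator_nonneg (fun _ _ => zero_le_one) ω
  have hS : ∀ l, BddMeas mΩ (fun ω => ∑ i ∈ Finset.Ico j l, D i ω) :=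
    fun l => BddMeas.sum fun i _ => (hD i).mono (hm i)
  have hM : BddMeas mΩ (fun ω => ∑ i ∈ Finset.Ico j n, (Y i ω - D i ω)) :=
    BddMeas.sum fun i _ => ((hY i).mono (hm _)).sub ((hD i).mono (hm _))
  have hDS : ∀ l ∈ Finset.Ico j n, ∀ ω, D l ω ≤ ∑ i ∈ Finset.Ico j (l + 1), D i ω := by
    intro l hl ω
    rw [Finset.mem_Ico] at hl
    exact Finset.single_le_sum (f := fun i => D i ω) (fun i _ => hD0 i ω)
      (Finset.mem_Ico.2 ⟨hl.1, by omega⟩)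
  have hreg : ∀ ε : ℝ, 0 < ε →
      ∫ ω, (∑ i ∈ Finset.Ico j n, (Y i ω - D i ω)) ^ 2 * (∑ i ∈ Finset.Ico j n, D i ω + ε)⁻¹
        * A.indicator (fun _ => (1 : ℝ)) ω ∂P
      ≤ ∑ l ∈ Finset.Ico j n, ∫ ω, D l ω / (∑ i ∈ Finset.Ico j (l + 1), D i ω)
        * A.indicator (fun _ => (1 : ℝ)) ω ∂P := by
    intro ε hε
    refine (integral_sq_div_add_le P m hm hmono n j Y D hY hY2 hD hD0 hYD hA hε n hjn
      le_rfl).trans (Finset.sum_le_sum fun l hl => ?_)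
    have hq : BddMeas mΩ (fun ω => D l ω / (∑ i ∈ Finset.Ico j (l + 1), D i ω)) := by
      refine ⟨(((hD l).mono (hm l)).1.measurable.div (hS (l + 1)).1.measurable).stronglyMeasurable,
        1, fun ω => ?_⟩
      rw [abs_of_nonneg (div_nonneg (hD0 l ω) (hS0 _ ω))]
      exact div_le_one_of_le₀ (hDS l hl ω) (hS0 _ ω)
    refine integral_mono
      (((((hD l).mono (hm l)).mul ((hS (l + 1)).inv_add (hS0 _) hε)).mul hI).integrable P)
      ((hq.mul hI).integrable P) fun ω => mul_le_mul_of_nonneg_right ?_ (hI0 ω)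
    rcases (hS0 (l + 1) ω).eq_or_lt with h | h
    · have hz : D l ω = 0 := le_antisymm (h ▸ hDS l hl ω) (hD0 l ω)
      simp [hz]
    · rw [div_eq_mul_inv]
      exact mul_le_mul_of_nonneg_left (inv_anti₀ h (by linarith)) (hD0 l ω)
  by_cases hint : Integrable (fun ω => (∑ i ∈ Finset.Ico j n, (Y i ω - D i ω)) ^ 2
      / (∑ i ∈ Finset.Ico j n, D i ω) * A.indicator (fun _ => (1 : ℝ)) ω) P
  swap
  · rw [integral_undef hint]
    exact Finset.sum_nonneg fun l _ => integral_nonneg fun ω =>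
      mul_nonneg (div_nonneg (hD0 l ω) (hS0 _ ω)) (hI0 ω)
  -- `(M² / S) * (S / (S + ε))` is dominated by `M² / S` and by `M² / (S + ε)`, also where `S = 0`.
  set e : ℕ → ℝ := fun N => 1 / ((N : ℝ) + 1) with he
  have he0 : ∀ N, 0 < e N := fun N => Nat.one_div_pos_of_nat
  set S : Ω → ℝ := fun ω => ∑ i ∈ Finset.Ico j n, D i ω with hSdef
  set M : Ω → ℝ := fun ω => ∑ i ∈ Finset.Ico j n, (Y i ω - D i ω) with hMdef
  have hSn : ∀ ω, 0 ≤ S ω := hS0 n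
  have hSe : ∀ N ω, 0 < S ω + e N := fun N ω => by linarith [hSn ω, he0 N]
  have hfrac : ∀ N, BddMeas mΩ (fun ω => S ω * (S ω + e N)⁻¹) :=
    fun N => (hS n).mul ((hS n).inv_add (hS0 n) (he0 N))
  have hlim : Filter.Tendsto (fun N => ∫ ω, (M ω ^ 2 / S ω * A.indicator (fun _ => (1 : ℝ)) ω)
      * (S ω * (S ω + e N)⁻¹) ∂P) Filter.atTop
      (nhds (∫ ω, M ω ^ 2 / S ω * A.indicator (fun _ => (1 : ℝ)) ω ∂P)) := by
    refine tendsto_integral_of_dominated_convergence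
      (fun ω => M ω ^ 2 / S ω * A.indicator (fun _ => (1 : ℝ)) ω)
      (fun N => hint.1.mul (hfrac N).1.aestronglyMeasurable) hint
      (fun N => Filter.Eventually.of_forall fun ω => ?_) (Filter.Eventually.of_forall fun ω => ?_)
    · have h1 : 0 ≤ M ω ^ 2 / S ω * A.indicator (fun _ => (1 : ℝ)) ω :=
        mul_nonneg (div_nonneg (sq_nonneg _) (hSn ω)) (hI0 ω)
      have h2 : 0 ≤ S ω * (S ω + e N)⁻¹ := mul_nonneg (hSn ω) (inv_nonneg.2 (hSe N ω).le)
      rw [Real.norm_of_nonneg (mul_nonneg h1 h2)]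
      refine mul_le_of_le_one_right h1 ?_
      rw [← div_eq_mul_inv]
      exact div_le_one_of_le₀ (by linarith [he0 N]) (hSe N ω).le
    · rcases (hSn ω).eq_or_lt with h | h
      · simp [← h]
      · have h3 : Filter.Tendsto (fun N => S ω + e N) Filter.atTop (nhds (S ω + 0)) :=
          tendsto_const_nhds.add tendsto_one_div_add_atTop_nhds_zero_nat
        have h4 := ((h3.inv₀ (by simpa using h.ne')).const_mul (S ω)).const_mul
          (M ω ^ 2 / S ω * A.indicator (fun _ => (1 : ℝ)) ω)
        simpa [h.ne'] using h4
  refine le_of_tendsto' hlim fun N => le_trans ?_ (hreg (e N) (he0 N))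
  refine integral_mono_of_nonneg (Filter.Eventually.of_forall fun ω => ?_) ?_
    (Filter.Eventually.of_forall fun ω => ?_)
  · exact mul_nonneg (mul_nonneg (div_nonneg (sq_nonneg _) (hSn ω)) (hI0 ω))
      (mul_nonneg (hSn ω) (inv_nonneg.2 (hSe N ω).le))
  · simp_rw [pow_two]
    exact (((hM.mul hM).mul ((hS n).inv_add (hS0 n) (he0 N))).mul hI).integrable P
  · change M ω ^ 2 / S ω * _ * (S ω * (S ω + e N)⁻¹) ≤ M ω ^ 2 * (S ω + e N)⁻¹ * _
    rcases (hSn ω).eq_or_lt with h | h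
    · rw [← h]
      simp only [div_zero, zero_mul]
      exact mul_nonneg (mul_nonneg (sq_nonneg _)
        (inv_nonneg.2 (by linarith [he0 N]))) (hI0 ω)
    · apply le_of_eq
      field_simp

/-! ### Transition densities and conditional laws of pairs -/

/-- The Markov kernel `x ↦ s(x, ·) μ` with transition density `s`. -/
noncomputable def densityKernel {𝕏 : Type*} [MeasurableSpace 𝕏] (μ : Measure 𝕏) [SigmaFinite μ]
    (s : 𝕏 → 𝕏 → ℝ) : ProbabilityTheory.Kernel 𝕏 𝕏 :=
  (ProbabilityTheory.Kernel.const 𝕏 μ).withDensity fun x y => ENNReal.ofReal (s x y)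

lemma integrable_density {𝕏 : Type*} [MeasurableSpace 𝕏] {μ : Measure 𝕏} {s : 𝕏 → 𝕏 → ℝ}
    (hs1 : ∀ x, ∫ y, s x y ∂μ = 1) (x : 𝕏) : Integrable (s x) μ := by
  by_contra h
  have := hs1 x
  rw [integral_undef h] at this
  exact zero_ne_one this

section Transition

variable {𝕏 : Type*} [MeasurableSpace 𝕏] {μ : Measure 𝕏} [SigmaFinite μ] {s : 𝕏 → 𝕏 → ℝ}

lemma densityKernel_apply_eq (hs : Measurable (Function.uncurry s)) (hs0 : ∀ x y, 0 ≤ s x y)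
    (hs1 : ∀ x, ∫ y, s x y ∂μ = 1) (x : 𝕏) {E : Set 𝕏} (hE : MeasurableSet E) :
    densityKernel μ s x E
      = ENNReal.ofReal (∫ y, E.indicator (fun _ => (1 : ℝ)) y * s x y ∂μ) := by
  have h1 : (fun y => E.indicator (fun _ => (1 : ℝ)) y * s x y) = E.indicator (s x) := by
    ext y
    by_cases h : y ∈ E <;> simp [h]
  rw [densityKernel, ProbabilityTheory.Kernel.withDensity_apply' _ hs.ennreal_ofReal,
    ProbabilityTheory.Kernel.const_apply, h1, integral_indicator hE,
    ofReal_integral_eq_lintegral_ofReal (integrable_density hs1 x).integrableOn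
      (Filter.Eventually.of_forall (hs0 x))]

lemma isMarkovKernel_densityKernel (hs : Measurable (Function.uncurry s))
    (hs0 : ∀ x y, 0 ≤ s x y) (hs1 : ∀ x, ∫ y, s x y ∂μ = 1) :
    ProbabilityTheory.IsMarkovKernel (densityKernel μ s) := by
  refine ⟨fun x => ⟨?_⟩⟩
  rw [densityKernel_apply_eq hs hs0 hs1 x MeasurableSet.univ]
  simp [hs1 x]

/-- The one-step probability `x ↦ ∫ 1_K(x, y) s(x, y) dμ(y)` is measurable and, as
`s(x, ·)` integrates to `1`, bounded. -/
lemma transition_bddMeas (hs : Measurable (Function.uncurry s)) (hs0 : ∀ x y, 0 ≤ s x y)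
    (hs1 : ∀ x, ∫ y, s x y ∂μ = 1) {K : Set (𝕏 × 𝕏)} (hK : MeasurableSet K) :
    BddMeas inferInstance
      (fun x => ∫ y, K.indicator (fun _ => (1 : ℝ)) (x, y) * s x y ∂μ) := by
  refine ⟨?_, 1, fun x => ?_⟩
  · have hf : StronglyMeasurable
        (fun p : 𝕏 × 𝕏 => K.indicator (fun _ => (1 : ℝ)) p * s p.1 p.2) :=
      ((measurable_const.indicator hK).mul hs).stronglyMeasurable
    exact hf.integral_prod_right'
  · have h0 : ∀ y, 0 ≤ K.indicator (fun _ => (1 : ℝ)) (x, y) :=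
      fun y => Set.indicator_nonneg (fun _ _ => zero_le_one) _
    rw [abs_of_nonneg (integral_nonneg fun y => mul_nonneg (h0 y) (hs0 x y))]
    refine le_trans (integral_mono_of_nonneg
      (Filter.Eventually.of_forall fun y => mul_nonneg (h0 y) (hs0 x y))
      (integrable_density hs1 x) (Filter.Eventually.of_forall fun y => ?_))
      (hs1 x).le
    refine mul_le_of_le_one_left (hs0 x y) ?_
    exact Set.indicator_le_self' (f := fun _ => (1 : ℝ)) (by simp) _

/-- If `s(U, ·)` is the conditional density of `V` given `m`, and `U` is `m`-measurable, then the
law of `(U, V)` on each event `B ∈ m` is that of `U` composed with the kernel `s(x, ·) μ`, since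
the two measures agree on rectangles. -/
lemma map_pair_restrict {Ω : Type*} {m : MeasurableSpace Ω} [mΩ : MeasurableSpace Ω]
    (P : Measure Ω) [IsProbabilityMeasure P] (hm : m ≤ mΩ) {U V : Ω → 𝕏}
    (hU : Measurable[m] U) (hV : Measurable V)
    (hs : Measurable (Function.uncurry s)) (hs0 : ∀ x y, 0 ≤ s x y)
    (hs1 : ∀ x, ∫ y, s x y ∂μ = 1)
    (h : ∀ g : 𝕏 → ℝ, Measurable g → (∃ C, ∀ x, |g x| ≤ C) →
      P[(fun ω => g (V ω)) | m] =ᵐ[P] fun ω => ∫ y, g y * s (U ω) y ∂μ)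
    {B : Set Ω} (hB : MeasurableSet[m] B) :
    (P.restrict B).map (fun ω => (U ω, V ω))
      = ((P.restrict B).map U).compProd (densityKernel μ s) := by
  have := isMarkovKernel_densityKernel hs hs0 hs1
  have hU' : Measurable U := hU.mono hm le_rfl
  refine Measure.ext_prod fun {C E} hC hE => ?_
  have hBC : MeasurableSet[m] (U ⁻¹' C ∩ B) := (hU hC).inter hB
  have hEI : BddMeas inferInstance (E.indicator fun _ => (1 : ℝ)) := BddMeas.indicator_one hE
  have hce := h _ hEI.1.measurable hEI.2
  have hint : Integrable (fun ω => E.indicator (fun _ => (1 : ℝ)) (V ω)) P :=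
    BddMeas.integrable ⟨hEI.1.comp_measurable hV, hEI.2.imp fun _ hC ω => hC _⟩ P
  have hset := setIntegral_condExp hm hint hBC
  rw [setIntegral_congr_ae (hm _ hBC) (hce.mono fun ω hω _ => hω)] at hset
  have hV' : ∫ ω in U ⁻¹' C ∩ B, E.indicator (fun _ => (1 : ℝ)) (V ω) ∂P
      = (P.restrict (U ⁻¹' C ∩ B)).real (V ⁻¹' E) := by
    rw [← integral_indicator_one (hV hE)]
    rfl
  have hDint : Integrable (fun ω => ∫ y, E.indicator (fun _ => (1 : ℝ)) y * s (U ω) y ∂μ) P :=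
    (integrable_congr hce).1 integrable_condExp
  rw [Measure.map_apply (hU'.prodMk hV) (hC.prod hE), Measure.compProd_apply_prod hC hE,
    setLIntegral_map hC (ProbabilityTheory.Kernel.measurable_coe _ hE) hU',
    Measure.restrict_restrict (hU' hC)]
  simp_rw [densityKernel_apply_eq hs hs0 hs1 _ hE]
  rw [← ofReal_integral_eq_lintegral_ofReal hDint.integrableOn
    (Filter.Eventually.of_forall fun ω => integral_nonneg fun y =>
      mul_nonneg (Set.indicator_nonneg (fun _ _ => zero_le_one) _) (hs0 _ _)),
    hset, hV', Measure.real, ENNReal.ofReal_toReal (measure_ne_top _ _),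
    Measure.restrict_apply (hV hE),
    Measure.restrict_apply ((hU'.prodMk hV) (hC.prod hE)), Set.mk_preimage_prod]
  congr 1
  ext ω
  simp only [Set.mem_inter_iff]
  tauto

/-- The conditional-density property extends from functions of `V` to indicators of measurable
subsets of the product. -/
lemma condExp_indicator_pair {Ω : Type*} {m : MeasurableSpace Ω} [mΩ : MeasurableSpace Ω]
    (P : Measure Ω) [IsProbabilityMeasure P] (hm : m ≤ mΩ) {U V : Ω → 𝕏}
    (hU : Measurable[m] U) (hV : Measurable V)
    (hs : Measurable (Function.uncurry s)) (hs0 : ∀ x y, 0 ≤ s x y)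
    (hs1 : ∀ x, ∫ y, s x y ∂μ = 1)
    (h : ∀ g : 𝕏 → ℝ, Measurable g → (∃ C, ∀ x, |g x| ≤ C) →
      P[(fun ω => g (V ω)) | m] =ᵐ[P] fun ω => ∫ y, g y * s (U ω) y ∂μ)
    {K : Set (𝕏 × 𝕏)} (hK : MeasurableSet K) :
    P[(fun ω => K.indicator (fun _ => (1 : ℝ)) (U ω, V ω)) | m]
      =ᵐ[P] fun ω => ∫ y, K.indicator (fun _ => (1 : ℝ)) (U ω, y) * s (U ω) y ∂μ := by
  have := isMarkovKernel_densityKernel hs hs0 hs1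
  have hU' : Measurable U := hU.mono hm le_rfl
  have hUV : Measurable fun ω => (U ω, V ω) := hU'.prodMk hV
  have hT := transition_bddMeas hs hs0 hs1 hK
  have hTU : BddMeas m
      (fun ω => ∫ y, K.indicator (fun _ => (1 : ℝ)) (U ω, y) * s (U ω) y ∂μ) :=
    ⟨hT.1.comp_measurable hU, hT.2.imp fun _ hC ω => hC _⟩
  have hTi := (hTU.mono hm).integrable P
  have hT0 : ∀ ω, 0 ≤ ∫ y, K.indicator (fun _ => (1 : ℝ)) (U ω, y) * s (U ω) y ∂μ :=
    fun ω => integral_nonneg fun y =>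
      mul_nonneg (Set.indicator_nonneg (fun _ _ => zero_le_one) _) (hs0 _ _)
  have hKint : Integrable (fun ω => K.indicator (fun _ => (1 : ℝ)) (U ω, V ω)) P :=
    (BddMeas.indicator_one (hUV hK)).integrable P
  refine (ae_eq_condExp_of_forall_setIntegral_eq hm hKint (fun _ _ _ => hTi.integrableOn)
    (fun B hB _ => ?_) hTU.1.aestronglyMeasurable).symm
  have hmap := congrArg (fun ν => ν K) (map_pair_restrict P hm hU hV hs hs0 hs1 h hB)
  rw [Measure.map_apply hUV hK, Measure.compProd_apply hK,
    lintegral_map (ProbabilityTheory.Kernel.measurable_kernel_prodMk_left hK) hU'] at hmap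
  have hker : ∀ x, densityKernel μ s x (Prod.mk x ⁻¹' K)
      = ENNReal.ofReal (∫ y, K.indicator (fun _ => (1 : ℝ)) (x, y) * s x y ∂μ) :=
    fun x => densityKernel_apply_eq hs hs0 hs1 x (measurable_prodMk_left hK)
  simp_rw [hker] at hmap
  rw [← ofReal_integral_eq_lintegral_ofReal hTi.integrableOn
    (Filter.Eventually.of_forall hT0)] at hmap
  have hr := congrArg ENNReal.toReal hmap
  rw [ENNReal.toReal_ofReal (integral_nonneg hT0)] at hr
  rw [← hr, ← Measure.real, ← integral_indicator_one (hUV hK)]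
  rfl

end Transition

/-! ### The inequality for the Markov chain -/

/-- For a homogeneous Markov chain with transition density `s` w.r.t. `μ`,
a measurable `K ⊆ 𝕏²`, `j ∈ {0,…,n-1}` and `𝓐' ∈ 𝓕_j = σ(X_0,…,X_j)`, writing
`D_i(ω) = E[1_K(X_i,X_{i+1}) | X_i](ω) = ∫ 1_K(X_i(ω),y) s(X_i(ω),y) dμ(y)`, one has
`E[ (∑_{i=j}^{n-1} (1_K(X_i,X_{i+1}) - D_i))² / (∑_{i=j}^{n-1} D_i) ⬝ 1_{𝓐'} ]
  ≤ ∑_{k=j}^{n-1} E[ D_k / (∑_{i=j}^{k} D_i) ⬝ 1_{𝓐'} ]`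
(with the convention `0/0 = 0`). -/
theorem stmt_2
    {Ω : Type*} [MeasurableSpace Ω] (P : Measure Ω) [IsProbabilityMeasure P]
    {𝕏 : Type*} [MeasurableSpace 𝕏] (μ : Measure 𝕏) [SigmaFinite μ]
    (n : ℕ) (hn : 3 < n) (X : ℕ → Ω → 𝕏) (hX : ∀ i, Measurable (X i))
    (s : 𝕏 → 𝕏 → ℝ) (hs : Measurable (Function.uncurry s)) (hs0 : ∀ x y, 0 ≤ s x y)
    (hs1 : ∀ x, ∫ y, s x y ∂μ = 1)
    (hMarkov : ∀ i, i < n → ∀ g : 𝕏 → ℝ, Measurable g → (∃ C, ∀ x, |g x| ≤ C) →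
      P[(fun ω => g (X (i + 1) ω)) |
          ⨆ k ∈ Finset.range (i + 1), MeasurableSpace.comap (X k) inferInstance]
        =ᵐ[P] fun ω => ∫ y, g y * s (X i ω) y ∂μ)
    (K : Set (𝕏 × 𝕏)) (hK : MeasurableSet K)
    (j : ℕ) (hj : j < n)
    (A' : Set Ω)
    (hA' : MeasurableSet[⨆ k ∈ Finset.range (j + 1), MeasurableSpace.comap (X k) inferInstance] A') :
    (∫ ω,
        ((∑ i ∈ Finset.Icc j (n - 1),
            (K.indicator (fun _ => (1 : ℝ)) (X i ω, X (i + 1) ω)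
              - ∫ y, K.indicator (fun _ => (1 : ℝ)) (X i ω, y) * s (X i ω) y ∂μ)) ^ 2
          / (∑ i ∈ Finset.Icc j (n - 1),
              ∫ y, K.indicator (fun _ => (1 : ℝ)) (X i ω, y) * s (X i ω) y ∂μ))
          * A'.indicator (fun _ => (1 : ℝ)) ω ∂P)
      ≤ ∑ k ∈ Finset.Icc j (n - 1),
          ∫ ω,
            ((∫ y, K.indicator (fun _ => (1 : ℝ)) (X k ω, y) * s (X k ω) y ∂μ)
              / (∑ i ∈ Finset.Icc j k,
                  ∫ y, K.indicator (fun _ => (1 : ℝ)) (X i ω, y) * s (X i ω) y ∂μ))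
            * A'.indicator (fun _ => (1 : ℝ)) ω ∂P := by
  have hIcc : Finset.Icc j (n - 1) = Finset.Ico j n := by
    ext i
    simp only [Finset.mem_Icc, Finset.mem_Ico]
    omega
  have hIcc' : ∀ k, Finset.Icc j k = Finset.Ico j (k + 1) := by
    intro k
    ext i
    simp only [Finset.mem_Icc, Finset.mem_Ico]
    omega
  have hm : ∀ i, (⨆ k ∈ Finset.range (i + 1),
      MeasurableSpace.comap (X k) inferInstance) ≤ (inferInstance : MeasurableSpace Ω) :=
    fun i => iSup₂_le fun k _ => (hX k).comap_le
  have hmono : Monotone fun i : ℕ => (⨆ k ∈ Finset.range (i + 1),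
      MeasurableSpace.comap (X k) inferInstance : MeasurableSpace Ω) :=
    fun a b hab => biSup_mono fun k hk => by
      rw [Finset.mem_range] at hk ⊢
      omega
  have hXm : ∀ k i, k ≤ i → Measurable[⨆ k ∈ Finset.range (i + 1),
      MeasurableSpace.comap (X k) inferInstance] (X k) := by
    intro k i hki
    refine (comap_measurable (X k)).mono ?_ le_rfl
    exact le_iSup₂_of_le (f := fun k (_ : k ∈ Finset.range (i + 1)) =>
      MeasurableSpace.comap (X k) inferInstance) k (Finset.mem_range.2 (by omega)) le_rfl
  have hT := transition_bddMeas hs hs0 hs1 hK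
  rw [hIcc]
  simp_rw [hIcc']
  refine integral_sq_div_le P
    (fun i => ⨆ k ∈ Finset.range (i + 1), MeasurableSpace.comap (X k) inferInstance) hm hmono n j
    hj.le (fun i ω => K.indicator (fun _ => (1 : ℝ)) (X i ω, X (i + 1) ω))
    (fun i ω => ∫ y, K.indicator (fun _ => (1 : ℝ)) (X i ω, y) * s (X i ω) y ∂μ)
    (fun i => ?_) (fun i ω => ?_) (fun i => ?_) (fun i ω => ?_) (fun i hi => ?_) hA'
  · exact BddMeas.indicator_one
      (((hXm i (i + 1) (by omega)).prodMk (hXm (i + 1) (i + 1) le_rfl)) hK)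
  · by_cases h : (X i ω, X (i + 1) ω) ∈ K <;> simp [h]
  · exact ⟨hT.1.comp_measurable (hXm i i le_rfl), hT.2.imp fun _ hC ω => hC _⟩
  · exact integral_nonneg fun y =>
      mul_nonneg (Set.indicator_nonneg (fun _ _ => zero_le_one) _) (hs0 _ _)
  · exact condExp_indicator_pair P (hm i) (hXm i i le_rfl) (hX (i + 1)) hs hs0 hs1
      (hMarkov i hi) hK
end

section
/- For every finite partition m of [0,1]^{2d} into Borel sets, the histogram estimator ŝ_m satisfies C · E[ H²(s 1_A, ŝ_m) ] ≤ E[ H²(s 1_A, V_m) ] + (1 + log n)/n · |m|, where C = 1/(4 + log 2) and |m| is the number of elements of m. -/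
/-!
For a cell `K` put `S = ∑ ∫_K s`, `T = ∑ ∫_K √s`, `D = ∑ ∫_K 1` (sums over the visited states
`X_i`) and let `N` be the number of transitions that fall in `K`. The squared Hellinger distance
from `s 1_A` to `∑ a_K 1_K` is `1/(2n)` times the sum over the cells of `S - 2 √a_K T + a_K D`
(`hellSq_hist`). Hence the squared distance to `V_m` is `1/(2n) ∑ (S - T²/D)`, while `a_K = N/D` gives at
most `4 (S - T²/D) + 2 (√N - √S)²` on each cell (`quad_est`).

It remains to bound `E (√N - √S)²` for each cell. By the Markov property, extended from functions
of the next state to sets of pairs (`condExp_pair`), `S` is the predictable compensator of `N`.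
Deterministically `(√N - √S)² ≤ 2 (N - S)²/(1 + S) + 2`. Since `S` is predictable, normalising the
squared martingale by `1 + S` and following it step by step yields
`E (N - S)²/(1 + S) ≤ E log (1 + S) ≤ log (1 + n)` (`integral_sq_div_le`). This gives
`E (√N - √S)² ≤ 2 log (1 + n) + 2 ≤ 4 (1 + log n)`, and `1/(4 + log 2) ≤ 1/4` concludes.
-/

open MeasureTheory Real
open scoped ENNReal
noncomputable section

/-- The empirical Hellinger-type squared distance
`H²(f,f') = (1/(2n)) ∑_{i<n} ∫ (√f(X_i,y) - √f'(X_i,y))² dμ(y)`. -/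
def hellSq {Ω : Type*} {𝕏 : Type*} [MeasurableSpace 𝕏] (μ : Measure 𝕏)
    (n : ℕ) (X : ℕ → Ω → 𝕏) (ω : Ω) (f g : 𝕏 × 𝕏 → ℝ) : ℝ :=
  (1 / (2 * n)) * ∑ i ∈ Finset.range n,
    ∫ y, (Real.sqrt (f (X i ω, y)) - Real.sqrt (g (X i ω, y))) ^ 2 ∂μ

/-- The histogram estimator `ŝ_m` built on a partition `m` (convention `0/0 = 0`). -/
def histEst {Ω : Type*} {𝕏 : Type*} [MeasurableSpace 𝕏] (μ : Measure 𝕏)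
    (n : ℕ) (X : ℕ → Ω → 𝕏) (m : Finset (Set (𝕏 × 𝕏))) (ω : Ω) : 𝕏 × 𝕏 → ℝ :=
  fun p => ∑ K ∈ m,
    ((∑ i ∈ Finset.range n, K.indicator (fun _ => (1 : ℝ)) (X i ω, X (i + 1) ω)) /
      (∑ i ∈ Finset.range n, ∫ y, K.indicator (fun _ => (1 : ℝ)) (X i ω, y) ∂μ))
    * K.indicator (fun _ => (1 : ℝ)) p

/-- The set `V_m` of nonnegative piecewise constant functions on the partition `m`. -/
def histSpace {𝕏 : Type*} (m : Finset (Set (𝕏 × 𝕏))) : Set (𝕏 × 𝕏 → ℝ) :=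
  {g | ∃ a : Set (𝕏 × 𝕏) → ℝ, (∀ K ∈ m, 0 ≤ a K) ∧
    g = fun p => ∑ K ∈ m, a K * K.indicator (fun _ => (1 : ℝ)) p}

/-! ### The Hellinger distance to a histogram -/

/-- The integral of `f` over the section at `x` of `K`, namely `∫_{y : (x,y) ∈ K} f(x,y) dμ(y)`. -/
def secInt {𝕏 : Type*} [MeasurableSpace 𝕏] (μ : Measure 𝕏) (f : 𝕏 × 𝕏 → ℝ)
    (K : Set (𝕏 × 𝕏)) (x : 𝕏) : ℝ :=
  ∫ y, K.indicator f (x, y) ∂μ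

/-- The integral of `f` over `K` against the empirical measure `∑_{i<n} δ_{X_i} ⊗ μ`. -/
def empInt {Ω : Type*} {𝕏 : Type*} [MeasurableSpace 𝕏] (μ : Measure 𝕏) (n : ℕ) (X : ℕ → Ω → 𝕏)
    (f : 𝕏 × 𝕏 → ℝ) (K : Set (𝕏 × 𝕏)) (ω : Ω) : ℝ :=
  ∑ i ∈ Finset.range n, secInt μ f K (X i ω)

/-- On a partition `m` of `A`, the integrand of the Hellinger distance splits over the cells. -/
lemma sq_sqrt_sub_hist {α : Type*} {m : Finset (Set α)} {A : Set α}
    (hmdisj : ∀ K ∈ m, ∀ K' ∈ m, K ≠ K' → Disjoint K K') (hmcov : ⋃ K ∈ m, K = A)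
    (f : α → ℝ) (hf : ∀ p, 0 ≤ f p) (a : Set α → ℝ) (p : α) :
    (√(A.indicator f p) - √(∑ K ∈ m, a K * K.indicator (fun _ => (1 : ℝ)) p)) ^ 2
      = ∑ K ∈ m, (K.indicator f p - 2 * √(a K) * K.indicator (fun p => √(f p)) p
          + √(a K) ^ 2 * K.indicator (fun _ => (1 : ℝ)) p) := by
  by_cases hp : p ∈ A
  · obtain ⟨K, hK, hpK⟩ : ∃ K ∈ m, p ∈ K := by
      rw [← hmcov] at hp; simpa using hp
    have hother : ∀ K' ∈ m, K' ≠ K → p ∉ K' := fun K' hK' hne h =>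
      (Set.disjoint_left.1 (hmdisj K' hK' K hK hne)) h hpK
    rw [Finset.sum_eq_single_of_mem K hK (fun K' hK' hne => by simp [hother K' hK' hne]),
      Finset.sum_eq_single_of_mem K hK (fun K' hK' hne => by simp [hother K' hK' hne])]
    simp only [Set.indicator_of_mem hp, Set.indicator_of_mem hpK, mul_one]
    have := Real.sq_sqrt (hf p)
    linear_combination this
  · have hnot : ∀ K ∈ m, p ∉ K := fun K hK h => hp (by
      rw [← hmcov]; exact Set.mem_biUnion hK h)
    rw [Finset.sum_eq_zero (fun K hK => by simp [hnot K hK]),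
      Finset.sum_eq_zero (fun K hK => by simp [hnot K hK])]
    simp [hp]

section Hellinger

variable {Ω 𝕏 : Type*} [MeasurableSpace 𝕏] {μ : Measure 𝕏} {s : 𝕏 → 𝕏 → ℝ}

lemma integrable_section (hs : Measurable (Function.uncurry s))
    (hsi : ∀ x, Integrable (s x) μ) {K : Set (𝕏 × 𝕏)} (hK : MeasurableSet K) (x : 𝕏) :
    Integrable (fun y => K.indicator (fun p => s p.1 p.2) (x, y)) μ := by
  refine (hsi x).mono ?_ (.of_forall fun y => ?_)
  · exact ((hs.indicator hK).comp measurable_prodMk_left).aestronglyMeasurable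
  · by_cases h : (x, y) ∈ K <;> simp [h]

lemma integrable_section_sqrt (hs : Measurable (Function.uncurry s)) (hs0 : ∀ x y, 0 ≤ s x y)
    (hsi : ∀ x, Integrable (s x) μ) {K : Set (𝕏 × 𝕏)} (hK : MeasurableSet K) (x : 𝕏)
    (hKi : Integrable (fun y => K.indicator (fun _ => (1 : ℝ)) (x, y)) μ) :
    Integrable (fun y => K.indicator (fun p => √(s p.1 p.2)) (x, y)) μ := by
  refine (hKi.add (integrable_section hs hsi hK x)).mono' ?_ (.of_forall fun y => ?_)
  · exact ((hs.sqrt.indicator hK).comp measurable_prodMk_left).aestronglyMeasurable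
  · by_cases h : (x, y) ∈ K
    · simp only [Pi.add_apply, Set.indicator_of_mem h, Real.norm_eq_abs, abs_of_nonneg (sqrt_nonneg _)]
      have := Real.sq_sqrt (hs0 x y)
      nlinarith [sq_nonneg (√(s x y) - 1), Real.sqrt_nonneg (s x y)]
    · simp [h]

/-- The squared distance from `s 1_A` to `∑_K a_K 1_K` is a sum of quadratic polynomials
in the variables `√a_K`. -/
lemma hellSq_hist (hs : Measurable (Function.uncurry s)) (hs0 : ∀ x y, 0 ≤ s x y)
    (hsi : ∀ x, Integrable (s x) μ) {m : Finset (Set (𝕏 × 𝕏))} {A : Set (𝕏 × 𝕏)}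
    (hmmeas : ∀ K ∈ m, MeasurableSet K)
    (hmdisj : ∀ K ∈ m, ∀ K' ∈ m, K ≠ K' → Disjoint K K') (hmcov : ⋃ K ∈ m, K = A)
    (hKi : ∀ K ∈ m, ∀ x, Integrable (fun y => K.indicator (fun _ => (1 : ℝ)) (x, y)) μ)
    (n : ℕ) (X : ℕ → Ω → 𝕏) (ω : Ω) (a : Set (𝕏 × 𝕏) → ℝ) :
    hellSq μ n X ω (A.indicator fun p => s p.1 p.2)
        (fun p => ∑ K ∈ m, a K * K.indicator (fun _ => (1 : ℝ)) p)
      = (1 / (2 * n)) * ∑ K ∈ m, (empInt μ n X (fun p => s p.1 p.2) K ω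
          - 2 * √(a K) * empInt μ n X (fun p => √(s p.1 p.2)) K ω
          + √(a K) ^ 2 * empInt μ n X (fun _ => 1) K ω) := by
  unfold hellSq empInt
  congr 1
  simp_rw [sq_sqrt_sub_hist hmdisj hmcov (fun p => s p.1 p.2) (fun p => hs0 _ _) a,
    Finset.mul_sum, ← Finset.sum_sub_distrib, ← Finset.sum_add_distrib]
  rw [Finset.sum_comm]
  refine Finset.sum_congr rfl fun i _ => ?_
  rw [integral_finsetSum]
  · refine Finset.sum_congr rfl fun K hK => ?_
    have h1 := integrable_section hs hsi (hmmeas K hK) (X i ω)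
    have h2 := integrable_section_sqrt hs hs0 hsi (hmmeas K hK) (X i ω) (hKi K hK _)
    have h3 : Integrable (fun y => K.indicator (fun p => s p.1 p.2) (X i ω, y)
        - 2 * √(a K) * K.indicator (fun p => √(s p.1 p.2)) (X i ω, y)) μ := h1.sub (h2.const_mul _)
    rw [integral_add h3 ((hKi K hK _).const_mul _),
      integral_sub h1 (h2.const_mul _), integral_const_mul, integral_const_mul]
    rfl
  · intro K hK
    have h1 := integrable_section hs hsi (hmmeas K hK) (X i ω)
    have h2 := integrable_section_sqrt hs hs0 hsi (hmmeas K hK) (X i ω) (hKi K hK _)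
    exact (h1.sub (h2.const_mul _)).add ((hKi K hK _).const_mul _)

lemma empInt_nonneg {f : 𝕏 × 𝕏 → ℝ} (hf : ∀ p, 0 ≤ f p) (n : ℕ) (X : ℕ → Ω → 𝕏)
    (K : Set (𝕏 × 𝕏)) (ω : Ω) : 0 ≤ empInt μ n X f K ω :=
  Finset.sum_nonneg fun _ _ => integral_nonneg fun _ => Set.indicator_nonneg (fun p _ => hf p) _

/-- Cauchy-Schwarz inequality on a cell, for the empirical measure. -/
lemma empInt_sqrt_sq_le (hs : Measurable (Function.uncurry s)) (hs0 : ∀ x y, 0 ≤ s x y)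
    (hsi : ∀ x, Integrable (s x) μ) {K : Set (𝕏 × 𝕏)} (hK : MeasurableSet K)
    (hKi : ∀ x, Integrable (fun y => K.indicator (fun _ => (1 : ℝ)) (x, y)) μ)
    (n : ℕ) (X : ℕ → Ω → 𝕏) (ω : Ω) :
    empInt μ n X (fun p => √(s p.1 p.2)) K ω ^ 2
      ≤ empInt μ n X (fun p => s p.1 p.2) K ω * empInt μ n X (fun _ => 1) K ω := by
  -- the quadratic polynomial `t ↦ ∫_K (√s - t)²` is nonnegative
  have hq : ∀ t : ℝ, 0 ≤ empInt μ n X (fun _ => 1) K ω * (t * t)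
      + (-2 * empInt μ n X (fun p => √(s p.1 p.2)) K ω) * t
      + empInt μ n X (fun p => s p.1 p.2) K ω := by
    intro t
    have : empInt μ n X (fun _ => 1) K ω * (t * t)
        + (-2 * empInt μ n X (fun p => √(s p.1 p.2)) K ω) * t
        + empInt μ n X (fun p => s p.1 p.2) K ω
        = ∑ i ∈ Finset.range n, ∫ y, K.indicator (fun p => (√(s p.1 p.2) - t) ^ 2) (X i ω, y) ∂μ := by
      unfold empInt
      rw [Finset.mul_sum, Finset.sum_mul, Finset.sum_mul, ← Finset.sum_add_distrib,
        ← Finset.sum_add_distrib]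
      refine Finset.sum_congr rfl fun i _ => ?_
      have h1 := integrable_section hs hsi hK (X i ω)
      have h2 := integrable_section_sqrt hs hs0 hsi hK (X i ω) (hKi _)
      have h3 : Integrable (fun y => K.indicator (fun _ => (1 : ℝ)) (X i ω, y) * (t * t)
          + -2 * K.indicator (fun p => √(s p.1 p.2)) (X i ω, y) * t) μ :=
        ((hKi _).mul_const _).add ((h2.const_mul _).mul_const _)
      unfold secInt
      rw [← integral_const_mul, ← integral_mul_const, ← integral_mul_const,
        ← integral_add ((hKi _).mul_const _) ((h2.const_mul _).mul_const _),
        ← integral_add h3 h1]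
      refine integral_congr_ae (.of_forall fun y => ?_)
      by_cases h : (X i ω, y) ∈ K
      · simp only [Set.indicator_of_mem h]
        have := Real.sq_sqrt (hs0 (X i ω) y)
        linear_combination -this
      · simp [h]
    rw [this]
    exact Finset.sum_nonneg fun _ _ => integral_nonneg fun _ =>
      Set.indicator_nonneg (fun p _ => sq_nonneg _) _
  have := discrim_le_zero hq
  unfold discrim at this
  nlinarith

end Hellinger

/-- The minimum of the quadratic polynomial attached to a cell; when `D = 0` both sides
reduce to `S`, since then `T = 0`. -/
lemma quad_min {S T D : ℝ} (hD : 0 ≤ D) (hCS : T ^ 2 ≤ S * D) (t : ℝ) :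
    S - T ^ 2 / D ≤ S - 2 * t * T + t ^ 2 * D := by
  rcases hD.eq_or_lt with rfl | hD
  · have : T = 0 := by nlinarith
    simp [this]
  · have : S - 2 * t * T + t ^ 2 * D - (S - T ^ 2 / D) = D * (t - T / D) ^ 2 := by
      field_simp; ring
    nlinarith [mul_nonneg hD.le (sq_nonneg (t - T / D))]

lemma quad_min_eq {S T D : ℝ} (hD : 0 ≤ D) :
    S - 2 * (T / D) * T + (T / D) ^ 2 * D = S - T ^ 2 / D := by
  rcases hD.eq_or_lt with rfl | hD
  · simp
  · field_simp; ring

/-- On one cell, the loss of the estimator is at most four times the bias plus twice the squared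
deviation of the root of the count `N` from the root of its compensator `S`. -/
lemma quad_est {S T D N : ℝ} (hS : 0 ≤ S) (hT : 0 ≤ T) (hD : 0 ≤ D) (hN : 0 ≤ N)
    (hCS : T ^ 2 ≤ S * D) :
    S - 2 * √(N / D) * T + √(N / D) ^ 2 * D
      ≤ 4 * (S - T ^ 2 / D) + 2 * (√N - √S) ^ 2 := by
  rcases hD.eq_or_lt with rfl | hD
  · simp only [div_zero, Real.sqrt_zero]
    nlinarith [sq_nonneg (√N - √S)]
  · have hd : 0 < √D := Real.sqrt_pos.2 hD
    obtain ⟨u, hu⟩ : ∃ u, u = T / √D := ⟨_, rfl⟩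
    have hu0 : 0 ≤ u := hu ▸ div_nonneg hT hd.le
    have hTu : T = u * √D := by rw [hu]; field_simp
    have hD2 := Real.sq_sqrt hD.le
    have hS2 := Real.sq_sqrt hS
    have hN2 := Real.sq_sqrt hN
    have hTD : T ^ 2 / D = u ^ 2 := by
      rw [hTu, mul_pow, hD2]; field_simp
    have huS : u ≤ √S := by
      apply Real.le_sqrt_of_sq_le
      rw [← hTD, div_le_iff₀ hD]; exact hCS
    have h1 : √(N / D) * T = √N * u := by
      rw [Real.sqrt_div hN, hTu]; field_simp
    have h2 : √(N / D) ^ 2 * D = √N ^ 2 := by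
      rw [Real.sq_sqrt (div_nonneg hN hD.le), hN2]; field_simp
    rw [hTD, mul_assoc, h1, h2, ← hS2, Real.sqrt_sq (Real.sqrt_nonneg S)]
    have : 0 ≤ (√S - u) * (√S + 5 * u) :=
      mul_nonneg (by linarith) (by have := Real.sqrt_nonneg S; linarith)
    nlinarith [sq_nonneg (√N - (2 * √S - u))]

/-! ### Deviations of a counting process from its compensator -/

lemma sq_sqrt_sub_sqrt_le {N S : ℝ} (hN : 0 ≤ N) (hS : 0 ≤ S) :
    (√N - √S) ^ 2 ≤ 2 * ((N - S) ^ 2 / (1 + S)) + 2 := by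
  have hN2 := Real.sq_sqrt hN
  have hS2 := Real.sq_sqrt hS
  have hn := Real.sqrt_nonneg N
  have hs := Real.sqrt_nonneg S
  have h1S : 0 < 1 + S := by linarith
  rw [← mul_div_assoc, ← sub_le_iff_le_add, le_div_iff₀ h1S]
  -- for `S ≥ 1` the first term suffices; for `S ≤ 1` one uses `(√N - √S)² ≤ |N - S|`
  rcases le_total 1 S with h | h
  · have h3 : (√N - √S) ^ 2 * S ≤ (N - S) ^ 2 := by
      have : (N - S) ^ 2 = (√N - √S) ^ 2 * (√N + √S) ^ 2 := by
        rw [← mul_pow]; congr 1; nlinarith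
      rw [this]
      exact mul_le_mul_of_nonneg_left (by nlinarith [mul_nonneg hn hs]) (sq_nonneg _)
    nlinarith [sq_nonneg (√N - √S)]
  · have h3 : (√N - √S) ^ 2 ≤ |N - S| := by
      rcases le_total (√N) (√S) with h' | h'
      · exact le_trans (by nlinarith) (neg_le_abs (N - S))
      · exact le_trans (by nlinarith) (le_abs_self (N - S))
    have h4 := sq_abs (N - S)
    nlinarith [sq_nonneg (|N - S| - 1), abs_nonneg (N - S)]

section Martingale

variable {Ω : Type*} [m0 : MeasurableSpace Ω] {P : Measure Ω} [IsProbabilityMeasure P]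

/-- The conditional expectation pulled out of an integral against a bounded weight. -/
lemma integral_mul_of_condExp {F : MeasurableSpace Ω} (hF : F ≤ m0) {G Y p : Ω → ℝ}
    (hG : Measurable[F] G) {C : ℝ} (hGb : ∀ ω, |G ω| ≤ C) (hY : Integrable Y P)
    (hYp : P[Y | F] =ᵐ[P] p) : ∫ ω, G ω * Y ω ∂P = ∫ ω, G ω * p ω ∂P := by
  have hGY : Integrable (G * Y) P :=
    hY.bdd_mul (c := C) (hG.mono hF le_rfl).aestronglyMeasurable (.of_forall hGb)
  have h1 : P[G * Y | F] =ᵐ[P] G * P[Y | F] :=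
    condExp_mul_of_stronglyMeasurable_left hG.stronglyMeasurable hGY hY
  calc ∫ ω, G ω * Y ω ∂P = ∫ ω, (P[G * Y | F]) ω ∂P := (integral_condExp hF).symm
    _ = ∫ ω, G ω * p ω ∂P := by
        refine integral_congr_ae ?_
        filter_upwards [h1, hYp] with ω h h'
        rw [h, Pi.mul_apply, h']

lemma integrable_of_abs_le {f : Ω → ℝ} (hf : Measurable f) (C : ℝ) (h : ∀ ω, |f ω| ≤ C) :
    Integrable f P :=
  (integrable_const C).mono' hf.aestronglyMeasurable (.of_forall h)

/-- A counting process `N` with compensator `S` satisfies `E[(N_k-S_k)²/(1+S_k)] ≤ E[log (1+S_k)]`: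
the normalisation is predictable, so each step adds at most `E[p/(1+S)]` with the updated `S`,
and `p/(1+S)` is at most the increment of `log (1+S)`. -/
lemma integral_sq_div_le_s3 {n : ℕ} (F : ℕ → MeasurableSpace Ω) (hF : ∀ k, F k ≤ m0)
    (hmono : Monotone F) (Y p : ℕ → Ω → ℝ) (hY : ∀ k, Measurable[F (k + 1)] (Y k))
    (hp : ∀ k, Measurable[F k] (p k)) (hY01 : ∀ k ω, Y k ω = 0 ∨ Y k ω = 1)
    (hp0 : ∀ k ω, 0 ≤ p k ω) (hp1 : ∀ k ω, p k ω ≤ 1)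
    (hYp : ∀ k < n, P[Y k | F k] =ᵐ[P] p k) (k : ℕ) (hk : k ≤ n) :
    ∫ ω, (∑ i ∈ Finset.range k, Y i ω - ∑ i ∈ Finset.range k, p i ω) ^ 2
        / (1 + ∑ i ∈ Finset.range k, p i ω) ∂P
      ≤ ∫ ω, Real.log (1 + ∑ i ∈ Finset.range k, p i ω) ∂P := by
  have hNm : ∀ k, Measurable[F k] fun ω => ∑ i ∈ Finset.range k, Y i ω := fun k =>
    Finset.measurable_fun_sum _ fun i hi =>
      (hY i).mono (hmono (by have := Finset.mem_range.1 hi; omega)) le_rfl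
  have hSm : ∀ k, Measurable[F k] fun ω => ∑ i ∈ Finset.range k, p i ω := fun k =>
    Finset.measurable_fun_sum _ fun i hi =>
      (hp i).mono (hmono (Finset.mem_range.1 hi).le) le_rfl
  have hSm' : ∀ k, Measurable[F k] fun ω => ∑ i ∈ Finset.range (k + 1), p i ω := fun k =>
    Finset.measurable_fun_sum _ fun i hi =>
      (hp i).mono (hmono (by have := Finset.mem_range.1 hi; omega)) le_rfl
  have hY0 : ∀ k ω, 0 ≤ Y k ω := fun k ω => by rcases hY01 k ω with h | h <;> simp [h]
  have hY1 : ∀ k ω, Y k ω ≤ 1 := fun k ω => by rcases hY01 k ω with h | h <;> simp [h]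
  have hN0 : ∀ k ω, 0 ≤ ∑ i ∈ Finset.range k, Y i ω := fun k ω =>
    Finset.sum_nonneg fun i _ => hY0 i ω
  have hS0 : ∀ k ω, 0 ≤ ∑ i ∈ Finset.range k, p i ω := fun k ω =>
    Finset.sum_nonneg fun i _ => hp0 i ω
  have hNk : ∀ k ω, ∑ i ∈ Finset.range k, Y i ω ≤ k := fun k ω =>
    (Finset.sum_le_sum fun i _ => hY1 i ω).trans (by simp)
  have hSk : ∀ k ω, ∑ i ∈ Finset.range k, p i ω ≤ k := fun k ω =>
    (Finset.sum_le_sum fun i _ => hp1 i ω).trans (by simp)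
  have hMk : ∀ k ω, |∑ i ∈ Finset.range k, Y i ω - ∑ i ∈ Finset.range k, p i ω| ≤ k :=
    fun k ω => abs_le.2 ⟨by linarith [hN0 k ω, hSk k ω], by linarith [hS0 k ω, hNk k ω]⟩
  have hlog : ∀ k, Integrable (fun ω => Real.log (1 + ∑ i ∈ Finset.range k, p i ω)) P := by
    intro k
    refine integrable_of_abs_le
      (Real.measurable_log.comp (measurable_const.add ((hSm k).mono (hF k) le_rfl))) k fun ω => ?_
    rw [abs_of_nonneg (Real.log_nonneg (by linarith [hS0 k ω]))]
    have := Real.log_le_sub_one_of_pos (x := 1 + ∑ i ∈ Finset.range k, p i ω)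
      (by linarith [hS0 k ω])
    linarith [hSk k ω]
  induction k with
  | zero => simp
  | succ k ih =>
    have ih := ih (by omega)
    set M : Ω → ℝ := fun ω => ∑ i ∈ Finset.range k, Y i ω - ∑ i ∈ Finset.range k, p i ω with hM
    set S : Ω → ℝ := fun ω => ∑ i ∈ Finset.range k, p i ω with hS
    set W : Ω → ℝ := fun ω => (1 + ∑ i ∈ Finset.range (k + 1), p i ω)⁻¹ with hW
    have hMF : Measurable[F k] M := (hNm k).sub (hSm k)
    have hWF : Measurable[F k] W := (measurable_const.add (hSm' k)).inv
    have hW0 : ∀ ω, 0 ≤ W ω := fun ω => inv_nonneg.2 (by linarith [hS0 (k + 1) ω])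
    have hW1 : ∀ ω, W ω ≤ 1 := fun ω => inv_le_one_of_one_le₀ (by linarith [hS0 (k + 1) ω])
    have hWS : ∀ ω, W ω ≤ (1 + S ω)⁻¹ := fun ω => by
      refine inv_anti₀ (by linarith [hS0 k ω]) ?_
      rw [Finset.sum_range_succ]; linarith [hp0 k ω]
    -- `G` is the coefficient of `Y k` in `W (M + Y k - p k)²`, where `Y k ^ 2 = Y k`;
    -- `R` below is the part free of `Y k`
    set G : Ω → ℝ := fun ω => W ω * (2 * M ω + 1 - 2 * p k ω) with hG
    have hGF : Measurable[F k] G :=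
      hWF.mul (((hMF.const_mul 2).add_const 1).sub ((hp k).const_mul 2))
    have hGb : ∀ ω, |G ω| ≤ 2 * k + 3 := fun ω => by
      rw [hG, abs_mul, abs_of_nonneg (hW0 ω)]
      have h1 : |2 * M ω + 1 - 2 * p k ω| ≤ 2 * k + 3 := by
        have := abs_le.1 (hMk k ω)
        rw [abs_le]; constructor <;> linarith [hp0 k ω, hp1 k ω, this.1, this.2]
      calc W ω * |2 * M ω + 1 - 2 * p k ω| ≤ 1 * (2 * k + 3) := by
            gcongr; exact hW1 ω
        _ = _ := one_mul _
    have hYi : Integrable (Y k) P := integrable_of_abs_le ((hY k).mono (hF _) le_rfl) 1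
      fun ω => by rw [abs_of_nonneg (hY0 k ω)]; exact hY1 k ω
    have hpi : Integrable (p k) P := integrable_of_abs_le ((hp k).mono (hF _) le_rfl) 1
      fun ω => by rw [abs_of_nonneg (hp0 k ω)]; exact hp1 k ω
    have hkey : ∫ ω, G ω * Y k ω ∂P = ∫ ω, G ω * p k ω ∂P :=
      integral_mul_of_condExp (hF k) hGF hGb hYi (hYp k (by omega))
    have hGm := (hGF.mono (hF k) le_rfl).aestronglyMeasurable (μ := P)
    have hGY : Integrable (fun ω => G ω * Y k ω) P :=
      hYi.bdd_mul (c := 2 * k + 3) hGm (.of_forall hGb)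
    have hGp : Integrable (fun ω => G ω * p k ω) P :=
      hpi.bdd_mul (c := 2 * k + 3) hGm (.of_forall hGb)
    set R : Ω → ℝ := fun ω => W ω * (M ω ^ 2 - 2 * M ω * p k ω + p k ω ^ 2) with hR
    have hRi : Integrable R P := by
      refine integrable_of_abs_le ((hWF.mul (((hMF.pow_const 2).sub
        ((hMF.const_mul 2).mul (hp k))).add ((hp k).pow_const 2))).mono (hF k) le_rfl)
        ((k + 1) ^ 2) fun ω => ?_
      have h0 : M ω ^ 2 - 2 * M ω * p k ω + p k ω ^ 2 = (M ω - p k ω) ^ 2 := by ring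
      rw [hR, abs_mul, abs_of_nonneg (hW0 ω), h0, abs_of_nonneg (sq_nonneg _)]
      have h1 : (M ω - p k ω) ^ 2 ≤ (k + 1) ^ 2 := by
        have := abs_le.1 (hMk k ω)
        apply sq_le_sq'  <;> linarith [hp0 k ω, hp1 k ω, this.1, this.2]
      calc W ω * (M ω - p k ω) ^ 2 ≤ 1 * (k + 1) ^ 2 := by gcongr; exact hW1 ω
        _ = _ := one_mul _
    have hMi : Integrable (fun ω => M ω ^ 2 / (1 + S ω)) P := by
      refine integrable_of_abs_le (((hMF.pow_const 2).div
        (measurable_const.add (hSm k))).mono (hF k) le_rfl) (k ^ 2) fun ω => ?_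
      rw [abs_of_nonneg (div_nonneg (sq_nonneg _) (by linarith [hS0 k ω]))]
      refine (div_le_self (sq_nonneg _) (by linarith [hS0 k ω])).trans ?_
      have := abs_le.1 (hMk k ω)
      exact sq_le_sq' this.1 this.2
    calc ∫ ω, (∑ i ∈ Finset.range (k + 1), Y i ω - ∑ i ∈ Finset.range (k + 1), p i ω) ^ 2
            / (1 + ∑ i ∈ Finset.range (k + 1), p i ω) ∂P
        = ∫ ω, (G ω * Y k ω + R ω) ∂P := by
          refine integral_congr_ae (.of_forall fun ω => ?_)
          have hYY : Y k ω ^ 2 = Y k ω := by rcases hY01 k ω with h | h <;> simp [h]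
          have hMe : ∑ i ∈ Finset.range (k + 1), Y i ω - ∑ i ∈ Finset.range (k + 1), p i ω
              = M ω + (Y k ω - p k ω) := by
            rw [hM, Finset.sum_range_succ, Finset.sum_range_succ]; ring
          simp only [div_eq_mul_inv]
          rw [hMe]
          change (M ω + (Y k ω - p k ω)) ^ 2 * W ω = _
          simp only [hG, hR]
          linear_combination W ω * hYY
      _ = ∫ ω, (G ω * p k ω + R ω) ∂P := by
          rw [integral_add hGY hRi, integral_add hGp hRi, hkey]
      _ ≤ ∫ ω, (M ω ^ 2 / (1 + S ω) + (Real.log (1 + ∑ i ∈ Finset.range (k + 1), p i ω)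
            - Real.log (1 + S ω))) ∂P := by
          refine integral_mono (hGp.add hRi) (hMi.add ((hlog (k + 1)).sub (hlog k))) fun ω => ?_
          have hSpos : 0 < 1 + S ω := by linarith [hS0 k ω]
          have hS1 : 1 + ∑ i ∈ Finset.range (k + 1), p i ω = 1 + S ω + p k ω := by
            rw [Finset.sum_range_succ, hS]; ring
          have hS1pos : 0 < 1 + S ω + p k ω := by linarith [hp0 k ω]
          have hlogp : W ω * p k ω ≤ Real.log (1 + ∑ i ∈ Finset.range (k + 1), p i ω)
              - Real.log (1 + S ω) := by
            have h := Real.one_sub_inv_le_log_of_pos (div_pos hS1pos hSpos)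
            rw [Real.log_div hS1pos.ne' hSpos.ne'] at h
            rw [hS1]
            refine le_trans (le_of_eq ?_) h
            simp only [hW]
            rw [hS1]; field_simp; ring
          have hMW : W ω * M ω ^ 2 ≤ M ω ^ 2 / (1 + S ω) := by
            rw [div_eq_inv_mul]; exact mul_le_mul_of_nonneg_right (hWS ω) (sq_nonneg _)
          have hsq : 0 ≤ W ω * p k ω ^ 2 := mul_nonneg (hW0 ω) (sq_nonneg _)
          have he : G ω * p k ω + R ω = W ω * M ω ^ 2 + W ω * p k ω - W ω * p k ω ^ 2 := by
            simp only [hG, hR]; ring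
          change G ω * p k ω + R ω ≤ _
          rw [he]
          linarith
      _ ≤ ∫ ω, Real.log (1 + ∑ i ∈ Finset.range (k + 1), p i ω) ∂P := by
          have h3 : Integrable (fun ω => Real.log (1 + ∑ i ∈ Finset.range (k + 1), p i ω)
            - Real.log (1 + S ω)) P := (hlog (k + 1)).sub (hlog k)
          rw [integral_add hMi h3, integral_sub (hlog (k + 1)) (hlog k)]
          linarith

/-- The variance term attached to one cell. -/
lemma integral_sq_sqrt_le {n : ℕ} (F : ℕ → MeasurableSpace Ω) (hF : ∀ k, F k ≤ m0)
    (hmono : Monotone F) (Y p : ℕ → Ω → ℝ) (hY : ∀ k, Measurable[F (k + 1)] (Y k))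
    (hp : ∀ k, Measurable[F k] (p k)) (hY01 : ∀ k ω, Y k ω = 0 ∨ Y k ω = 1)
    (hp0 : ∀ k ω, 0 ≤ p k ω) (hp1 : ∀ k ω, p k ω ≤ 1)
    (hYp : ∀ k < n, P[Y k | F k] =ᵐ[P] p k) :
    Integrable (fun ω => (√(∑ i ∈ Finset.range n, Y i ω) - √(∑ i ∈ Finset.range n, p i ω)) ^ 2) P
    ∧ ∫ ω, (√(∑ i ∈ Finset.range n, Y i ω) - √(∑ i ∈ Finset.range n, p i ω)) ^ 2 ∂P
      ≤ 2 * Real.log (1 + n) + 2 := by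
  have hY0 : ∀ k ω, 0 ≤ Y k ω := fun k ω => by rcases hY01 k ω with h | h <;> simp [h]
  have hY1 : ∀ k ω, Y k ω ≤ 1 := fun k ω => by rcases hY01 k ω with h | h <;> simp [h]
  have hN0 : ∀ ω, 0 ≤ ∑ i ∈ Finset.range n, Y i ω := fun ω =>
    Finset.sum_nonneg fun i _ => hY0 i ω
  have hS0 : ∀ ω, 0 ≤ ∑ i ∈ Finset.range n, p i ω := fun ω =>
    Finset.sum_nonneg fun i _ => hp0 i ω
  have hNk : ∀ ω, ∑ i ∈ Finset.range n, Y i ω ≤ n := fun ω =>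
    (Finset.sum_le_sum fun i _ => hY1 i ω).trans (by simp)
  have hSk : ∀ ω, ∑ i ∈ Finset.range n, p i ω ≤ n := fun ω =>
    (Finset.sum_le_sum fun i _ => hp1 i ω).trans (by simp)
  have hNm : Measurable fun ω => ∑ i ∈ Finset.range n, Y i ω :=
    Finset.measurable_fun_sum _ fun i _ => (hY i).mono (hF _) le_rfl
  have hSm : Measurable fun ω => ∑ i ∈ Finset.range n, p i ω :=
    Finset.measurable_fun_sum _ fun i _ => (hp i).mono (hF _) le_rfl
  have hMb : ∀ ω, (∑ i ∈ Finset.range n, Y i ω - ∑ i ∈ Finset.range n, p i ω) ^ 2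
        / (1 + ∑ i ∈ Finset.range n, p i ω) ≤ n ^ 2 := fun ω => by
    refine (div_le_self (sq_nonneg _) (by linarith [hS0 ω])).trans (sq_le_sq' ?_ ?_) <;>
      linarith [hN0 ω, hS0 ω, hNk ω, hSk ω]
  have hMi : Integrable (fun ω => (∑ i ∈ Finset.range n, Y i ω - ∑ i ∈ Finset.range n, p i ω) ^ 2
        / (1 + ∑ i ∈ Finset.range n, p i ω)) P := by
    refine integrable_of_abs_le (by fun_prop) (n ^ 2) fun ω => ?_
    rw [abs_of_nonneg (div_nonneg (sq_nonneg _) (by linarith [hS0 ω]))]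
    exact hMb ω
  have hi : Integrable (fun ω =>
      (√(∑ i ∈ Finset.range n, Y i ω) - √(∑ i ∈ Finset.range n, p i ω)) ^ 2) P := by
    refine integrable_of_abs_le ((hNm.sqrt.sub hSm.sqrt).pow_const 2) (2 * n ^ 2 + 2) fun ω => ?_
    rw [abs_of_nonneg (sq_nonneg _)]
    linarith [sq_sqrt_sub_sqrt_le (hN0 ω) (hS0 ω), hMb ω]
  refine ⟨hi, ?_⟩
  have hlogb : ∀ ω, Real.log (1 + ∑ i ∈ Finset.range n, p i ω) ≤ Real.log (1 + n) := fun ω =>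
    Real.log_le_log (by linarith [hS0 ω]) (by linarith [hSk ω])
  have h1 := integral_sq_div_le_s3 F hF hmono Y p hY hp hY01 hp0 hp1 hYp n le_rfl
  have h2 : ∫ ω, Real.log (1 + ∑ i ∈ Finset.range n, p i ω) ∂P ≤ Real.log (1 + n) := by
    calc _ ≤ ∫ _, Real.log (1 + n) ∂P :=
          integral_mono_of_nonneg
            (.of_forall fun ω => Real.log_nonneg (by linarith [hS0 ω])) (integrable_const _)
            (.of_forall hlogb)
      _ = _ := by simp
  calc _ ≤ ∫ ω, (2 * ((∑ i ∈ Finset.range n, Y i ω - ∑ i ∈ Finset.range n, p i ω) ^ 2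
        / (1 + ∑ i ∈ Finset.range n, p i ω)) + 2) ∂P :=
        integral_mono hi ((hMi.const_mul 2).add (integrable_const 2))
          fun ω => sq_sqrt_sub_sqrt_le (hN0 ω) (hS0 ω)
    _ = 2 * ∫ ω, (∑ i ∈ Finset.range n, Y i ω - ∑ i ∈ Finset.range n, p i ω) ^ 2
        / (1 + ∑ i ∈ Finset.range n, p i ω) ∂P + 2 := by
        rw [integral_add (hMi.const_mul 2) (integrable_const 2), integral_const_mul]; simp
    _ ≤ _ := by linarith

end Martingale

/-! ### The Markov property for pairs -/

section Markov

variable {𝕏 : Type*} [MeasurableSpace 𝕏] {μ : Measure 𝕏} {s : 𝕏 → 𝕏 → ℝ}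

lemma measurable_secInt [SFinite μ] {f : 𝕏 × 𝕏 → ℝ} (hf : Measurable f) {K : Set (𝕏 × 𝕏)}
    (hK : MeasurableSet K) : Measurable (secInt μ f K) :=
  ((hf.indicator hK).stronglyMeasurable.integral_prod_right' (ν := μ)).measurable

lemma secInt_nonneg (hs0 : ∀ x y, 0 ≤ s x y) (K : Set (𝕏 × 𝕏)) (x : 𝕏) :
    0 ≤ secInt μ (fun p => s p.1 p.2) K x :=
  integral_nonneg fun _ => Set.indicator_nonneg (fun p _ => hs0 p.1 p.2) _

lemma secInt_le_one (hs : Measurable (Function.uncurry s)) (hs0 : ∀ x y, 0 ≤ s x y)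
    (hsi : ∀ x, Integrable (s x) μ) (hs1 : ∀ x, ∫ y, s x y ∂μ = 1)
    {K : Set (𝕏 × 𝕏)} (hK : MeasurableSet K) (x : 𝕏) :
    secInt μ (fun p => s p.1 p.2) K x ≤ 1 := by
  rw [← hs1 x]
  exact integral_mono (integrable_section hs hsi hK x) (hsi x) fun y =>
    Set.indicator_le_self' (f := fun p : 𝕏 × 𝕏 => s p.1 p.2) (fun p _ => hs0 p.1 p.2) _

/-- The Markov property, stated for functions of the next state alone, extends to indicators of
arbitrary measurable sets of pairs (current state, next state): on each event `B` of the past, two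
finite measures on `𝕏 × 𝕏` agree on rectangles, hence everywhere. -/
lemma condExp_pair {Ω : Type*} {F : MeasurableSpace Ω} [m0 : MeasurableSpace Ω] {P : Measure Ω}
    [IsProbabilityMeasure P] [SFinite μ] (hs : Measurable (Function.uncurry s)) (hs0 : ∀ x y, 0 ≤ s x y)
    (hsi : ∀ x, Integrable (s x) μ) (hs1 : ∀ x, ∫ y, s x y ∂μ = 1)
    (hF : F ≤ m0) {X X' : Ω → 𝕏} (hX : Measurable[F] X)
    (hX' : Measurable X')
    (hM : ∀ g : 𝕏 → ℝ, Measurable g → (∃ C, ∀ x, |g x| ≤ C) →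
      P[(fun ω => g (X' ω)) | F] =ᵐ[P] fun ω => ∫ y, g y * s (X ω) y ∂μ)
    {K : Set (𝕏 × 𝕏)} (hK : MeasurableSet K) :
    P[(fun ω => K.indicator (fun _ => (1 : ℝ)) (X ω, X' ω)) | F]
      =ᵐ[P] fun ω => secInt μ (fun p => s p.1 p.2) K (X ω) := by
  have hX0 : Measurable X := hX.mono hF le_rfl
  have hpair : Measurable fun ω => (X ω, X' ω) := hX0.prodMk hX'
  have hsm : Measurable fun p : 𝕏 × 𝕏 => s p.1 p.2 := hs
  have hsecm : ∀ {K : Set (𝕏 × 𝕏)}, MeasurableSet K →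
      Measurable[F] fun ω => secInt μ (fun p => s p.1 p.2) K (X ω) :=
    fun hK => (measurable_secInt hsm hK).comp hX
  have hseci : ∀ {K : Set (𝕏 × 𝕏)}, MeasurableSet K →
      Integrable (fun ω => secInt μ (fun p => s p.1 p.2) K (X ω)) P := fun {K} hK =>
    integrable_of_abs_le ((hsecm hK).mono hF le_rfl) 1 fun ω => by
      rw [abs_of_nonneg (secInt_nonneg hs0 _ _)]; exact secInt_le_one hs hs0 hsi hs1 hK _
  have hindi : ∀ {K : Set (𝕏 × 𝕏)}, MeasurableSet K →
      Integrable (fun ω => K.indicator (fun _ => (1 : ℝ)) (X ω, X' ω)) P := fun {K} hK =>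
    integrable_of_abs_le ((measurable_const.indicator hK).comp hpair) 1 fun ω => by
      by_cases h : (X ω, X' ω) ∈ K <;> simp [h]
  refine (ae_eq_condExp_of_forall_setIntegral_eq hF (hindi hK)
    (fun B _ _ => (hseci hK).integrableOn) (fun B hB _ => ?_)
    (hsecm hK).stronglyMeasurable.aestronglyMeasurable).symm
  have hB0 : MeasurableSet B := hF _ hB
  set ν₁ : Measure (𝕏 × 𝕏) := (P.restrict B).map fun ω => (X ω, X' ω) with hν₁
  set ν₂ : Measure (𝕏 × 𝕏) := (((P.restrict B).map X).prod μ).withDensity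
    (fun p => ENNReal.ofReal (s p.1 p.2)) with hν₂
  have e1 : ∀ {K : Set (𝕏 × 𝕏)}, MeasurableSet K →
      ν₁ K = ENNReal.ofReal (∫ ω in B, K.indicator (fun _ => (1 : ℝ)) (X ω, X' ω) ∂P) := by
    intro K hK
    have : (fun ω => K.indicator (fun _ => (1 : ℝ)) (X ω, X' ω))
        = ((fun ω => (X ω, X' ω)) ⁻¹' K).indicator (fun _ => (1 : ℝ)) := rfl
    rw [this, integral_indicator (hpair hK), hν₁, Measure.map_apply hpair hK]
    simp
  have e2 : ∀ {K : Set (𝕏 × 𝕏)}, MeasurableSet K →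
      ν₂ K = ENNReal.ofReal (∫ ω in B, secInt μ (fun p => s p.1 p.2) K (X ω) ∂P) := by
    intro K hK
    have hm : Measurable (K.indicator fun p : 𝕏 × 𝕏 => ENNReal.ofReal (s p.1 p.2)) :=
      hsm.ennreal_ofReal.indicator hK
    rw [hν₂, withDensity_apply _ hK, ← lintegral_indicator hK, lintegral_prod _ hm.aemeasurable,
      lintegral_map hm.lintegral_prod_right' hX0,
      ofReal_integral_eq_lintegral_ofReal (hseci hK).integrableOn
        (.of_forall fun ω => secInt_nonneg hs0 _ _)]
    refine lintegral_congr fun ω => ?_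
    rw [secInt, ofReal_integral_eq_lintegral_ofReal (integrable_section hs hsi hK _)
      (.of_forall fun y => Set.indicator_nonneg (fun p _ => hs0 p.1 p.2) _)]
    refine lintegral_congr fun y => ?_
    by_cases h : (X ω, y) ∈ K <;> simp [h]
  have hfin : IsFiniteMeasure ν₁ := by rw [hν₁]; infer_instance
  have hνν : ν₁ = ν₂ := by
    refine Measure.ext_prod fun {U V} hU hV => ?_
    rw [e1 (hU.prod hV), e2 (hU.prod hV)]
    congr 1
    have hBU : MeasurableSet[F] (B ∩ X ⁻¹' U) := @MeasurableSet.inter Ω F _ _ hB (hX hU)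
    have hVm : Measurable (V.indicator fun _ => (1 : ℝ)) := measurable_const.indicator hV
    have hVb : ∀ x, |V.indicator (fun _ => (1 : ℝ)) x| ≤ 1 := fun x => by
      by_cases h : x ∈ V <;> simp [h]
    have hV' := hM _ hVm ⟨1, hVb⟩
    have l1 : (fun ω => (U ×ˢ V).indicator (fun _ => (1 : ℝ)) (X ω, X' ω))
        = (X ⁻¹' U).indicator fun ω => V.indicator (fun _ => (1 : ℝ)) (X' ω) := by
      ext ω
      by_cases hu : X ω ∈ U <;> by_cases hv : X' ω ∈ V <;> simp [hu, hv]
    have l2 : (fun ω => secInt μ (fun p => s p.1 p.2) (U ×ˢ V) (X ω))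
        = (X ⁻¹' U).indicator fun ω => ∫ y, V.indicator (fun _ => (1 : ℝ)) y * s (X ω) y ∂μ := by
      ext ω
      by_cases hu : X ω ∈ U
      · rw [Set.indicator_of_mem (by exact hu)]
        refine integral_congr_ae (.of_forall fun y => ?_)
        by_cases hv : y ∈ V <;> simp [hu, hv]
      · rw [Set.indicator_of_notMem (by exact hu)]
        simp [secInt, hu]
    have hVi : Integrable (fun ω => V.indicator (fun _ => (1 : ℝ)) (X' ω)) P :=
      integrable_of_abs_le (hVm.comp hX') 1 fun ω => hVb _
    rw [l1, l2, setIntegral_indicator (hX0 hU), setIntegral_indicator (hX0 hU),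
      ← setIntegral_condExp hF hVi hBU]
    exact setIntegral_congr_ae (hF _ hBU) (hV'.mono fun ω h _ => h)
  have h := (e2 hK).symm.trans ((congrArg (fun ν : Measure (𝕏 × 𝕏) => ν K) hνν.symm).trans (e1 hK))
  rwa [ENNReal.ofReal_eq_ofReal_iff (integral_nonneg fun ω => secInt_nonneg hs0 _ _)
    (integral_nonneg fun ω => Set.indicator_nonneg (fun _ _ => zero_le_one) _)] at h

end Markov

/-! ### The risk bound -/

/-- For every finite Borel partition `m` of `A = [0,1]^{2d}`, the histogram
estimator `ŝ_m` satisfies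
`C ⬝ E[H²(s 1_A, ŝ_m)] ≤ E[H²(s 1_A, V_m)] + (1 + log n)/n ⬝ |m|` with `C = 1/(4 + log 2)`. -/
theorem stmt_3
    (d : ℕ) (hd : 0 < d)
    {Ω : Type*} [MeasurableSpace Ω] (P : Measure Ω) [IsProbabilityMeasure P]
    (n : ℕ) (hn : 3 < n)
    (X : ℕ → Ω → (Fin d → ℝ)) (hX : ∀ i, Measurable (X i))
    (s : (Fin d → ℝ) → (Fin d → ℝ) → ℝ)
    (hs : Measurable (Function.uncurry s)) (hs0 : ∀ x y, 0 ≤ s x y)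
    (hs1 : ∀ x, ∫ y, s x y = 1)
    (hMarkov : ∀ i, i < n → ∀ g : (Fin d → ℝ) → ℝ, Measurable g → (∃ C, ∀ x, |g x| ≤ C) →
      P[(fun ω => g (X (i + 1) ω)) |
          ⨆ k ∈ Finset.range (i + 1), MeasurableSpace.comap (X k) inferInstance]
        =ᵐ[P] fun ω => ∫ y, g y * s (X i ω) y)
    (A : Set ((Fin d → ℝ) × (Fin d → ℝ)))
    (hA : A = (Set.Icc (0 : Fin d → ℝ) 1) ×ˢ (Set.Icc (0 : Fin d → ℝ) 1))
    (m : Finset (Set ((Fin d → ℝ) × (Fin d → ℝ))))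
    (hmmeas : ∀ K ∈ m, MeasurableSet K)
    (hmdisj : ∀ K ∈ m, ∀ K' ∈ m, K ≠ K' → Disjoint K K')
    (hmcov : ⋃ K ∈ m, K = A) :
    (1 / (4 + Real.log 2)) *
        ∫ ω, hellSq volume n X ω (A.indicator fun p => s p.1 p.2) (histEst volume n X m ω) ∂P
      ≤ (∫ ω, sInf {x : ℝ | ∃ g ∈ histSpace m,
            x = hellSq volume n X ω (A.indicator fun p => s p.1 p.2) g} ∂P)
        + (1 + Real.log n) / n * m.card := by

  have hn0 : (0 : ℝ) < n := by exact_mod_cast (by omega : 0 < n)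
  have hsm : Measurable fun p : (Fin d → ℝ) × (Fin d → ℝ) => s p.1 p.2 := hs
  have hsi : ∀ x, Integrable (s x) volume := fun x => by
    by_contra h
    have := hs1 x
    rw [integral_undef h] at this
    exact zero_ne_one this
  have hKi : ∀ K ∈ m, ∀ x, Integrable (fun y => K.indicator (fun _ => (1 : ℝ)) (x, y)) := by
    intro K hK x
    have hcube : Integrable ((Set.Icc (0 : Fin d → ℝ) 1).indicator fun _ => (1 : ℝ)) :=
      (integrable_indicator_iff measurableSet_Icc).2
        (integrableOn_const isCompact_Icc.measure_lt_top.ne)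
    refine hcube.mono ((measurable_const.indicator (hmmeas K hK)).comp
      measurable_prodMk_left).aestronglyMeasurable (.of_forall fun y => ?_)
    by_cases h : (x, y) ∈ K
    · have : (x, y) ∈ A := hmcov ▸ Set.mem_biUnion hK h
      rw [hA] at this
      simp [h, Set.indicator_of_mem this.2]
    · simp [h]
  set S : Set ((Fin d → ℝ) × (Fin d → ℝ)) → Ω → ℝ :=
    fun K ω => empInt volume n X (fun p => s p.1 p.2) K ω with hS
  set T : Set ((Fin d → ℝ) × (Fin d → ℝ)) → Ω → ℝ :=
    fun K ω => empInt volume n X (fun p => √(s p.1 p.2)) K ω with hT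
  set D : Set ((Fin d → ℝ) × (Fin d → ℝ)) → Ω → ℝ :=
    fun K ω => empInt volume n X (fun _ => 1) K ω with hD
  set N : Set ((Fin d → ℝ) × (Fin d → ℝ)) → Ω → ℝ :=
    fun K ω => ∑ i ∈ Finset.range n, K.indicator (fun _ => (1 : ℝ)) (X i ω, X (i + 1) ω) with hN
  have hS0 : ∀ K ω, 0 ≤ S K ω := fun K ω => empInt_nonneg (fun p => hs0 _ _) n X K ω
  have hT0 : ∀ K ω, 0 ≤ T K ω := fun K ω => empInt_nonneg (fun p => sqrt_nonneg _) n X K ω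
  have hD0 : ∀ K ω, 0 ≤ D K ω := fun K ω => empInt_nonneg (fun p => zero_le_one) n X K ω
  have hN0 : ∀ K ω, 0 ≤ N K ω := fun K ω =>
    Finset.sum_nonneg fun i _ => Set.indicator_nonneg (fun _ _ => zero_le_one) _
  have hCS : ∀ K ∈ m, ∀ ω, T K ω ^ 2 ≤ S K ω * D K ω := fun K hK ω =>
    empInt_sqrt_sq_le hs hs0 hsi (hmmeas K hK) (hKi K hK) n X ω
  have hell := fun ω => hellSq_hist hs hs0 hsi hmmeas hmdisj hmcov hKi n X ω
  -- the squared distance from `s 1_A` to `V_m`, attained at `a_K = (T_K / D_K)²`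
  set H : Ω → ℝ := fun ω => (1 / (2 * n)) * ∑ K ∈ m, (S K ω - T K ω ^ 2 / D K ω) with hH
  have hInf : ∀ ω, sInf {x : ℝ | ∃ g ∈ histSpace m,
      x = hellSq volume n X ω (A.indicator fun p => s p.1 p.2) g} = H ω := by
    intro ω
    refine IsLeast.csInf_eq ⟨⟨_, ⟨fun K => (T K ω / D K ω) ^ 2, fun K _ => sq_nonneg _, rfl⟩, ?_⟩, ?_⟩
    · rw [hell]
      simp only [hH]
      congr 1
      refine Finset.sum_congr rfl fun K _ => ?_
      rw [Real.sqrt_sq (div_nonneg (hT0 K ω) (hD0 K ω))]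
      exact (quad_min_eq (hD0 K ω)).symm
    · rintro x ⟨g, ⟨a, ha, rfl⟩, rfl⟩
      rw [hell]
      exact mul_le_mul_of_nonneg_left
        (Finset.sum_le_sum fun K hK => quad_min (hD0 K ω) (hCS K hK ω) _) (by positivity)
  have hEst : ∀ ω, hellSq volume n X ω (A.indicator fun p => s p.1 p.2) (histEst volume n X m ω)
      ≤ 4 * H ω + (1 / n) * ∑ K ∈ m, (√(N K ω) - √(S K ω)) ^ 2 := by
    intro ω
    have h1 : histEst volume n X m ω
        = fun p => ∑ K ∈ m, N K ω / D K ω * K.indicator (fun _ => (1 : ℝ)) p := rfl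
    rw [h1, hell ω fun K => N K ω / D K ω]
    calc _ ≤ (1 / (2 * (n : ℝ))) * ∑ K ∈ m, (4 * (S K ω - T K ω ^ 2 / D K ω)
          + 2 * (√(N K ω) - √(S K ω)) ^ 2) :=
          mul_le_mul_of_nonneg_left (Finset.sum_le_sum fun K hK =>
            quad_est (hS0 K ω) (hT0 K ω) (hD0 K ω) (hN0 K ω) (hCS K hK ω)) (by positivity)
      _ = _ := by
          rw [Finset.sum_add_distrib, ← Finset.mul_sum, ← Finset.mul_sum]
          simp only [hH]
          field_simp
  have hEmpm : ∀ {f : (Fin d → ℝ) × (Fin d → ℝ) → ℝ}, Measurable f → ∀ K ∈ m,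
      Measurable fun ω => empInt volume n X f K ω := fun hf K hK =>
    Finset.measurable_fun_sum _ fun i _ => (measurable_secInt hf (hmmeas K hK)).comp (hX i)
  have hHi : Integrable H P := by
    refine (integrable_finsetSum _ fun K hK => ?_).const_mul _
    refine integrable_of_abs_le ((hEmpm hsm K hK).sub (((hEmpm hsm.sqrt K hK).pow_const 2).div
      (hEmpm measurable_const K hK))) n fun ω => ?_
    have h1 : S K ω ≤ n := by
      refine (Finset.sum_le_sum fun i _ =>
        secInt_le_one hs hs0 hsi hs1 (hmmeas K hK) (X i ω)).trans (by simp)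
    have h2 : 0 ≤ T K ω ^ 2 / D K ω := div_nonneg (sq_nonneg _) (hD0 K ω)
    have h3 : T K ω ^ 2 / D K ω ≤ S K ω := div_le_of_le_mul₀ (hD0 K ω) (hS0 K ω) (hCS K hK ω)
    change |S K ω - T K ω ^ 2 / D K ω| ≤ n
    rw [abs_le]; constructor <;> linarith
  have hell0 : ∀ ω, 0 ≤ hellSq volume n X ω (A.indicator fun p => s p.1 p.2)
      (histEst volume n X m ω) := fun ω =>
    mul_nonneg (by positivity) (Finset.sum_nonneg fun i _ => integral_nonneg fun y => sq_nonneg _)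
  set F : ℕ → MeasurableSpace Ω := fun k =>
    ⨆ j ∈ Finset.range (k + 1), MeasurableSpace.comap (X j) inferInstance with hFdef
  have hF : ∀ k, F k ≤ (inferInstance : MeasurableSpace Ω) := fun k =>
    iSup₂_le fun j _ => (hX j).comap_le
  have hFmono : Monotone F := fun k l hkl =>
    biSup_mono fun j hj => by
      simp only [Finset.mem_range] at hj ⊢; omega
  have hXF : ∀ j k, j ≤ k → Measurable[F k] (X j) := fun j k hjk =>
    measurable_iff_comap_le.2 (le_iSup₂_of_le j (Finset.mem_range.2 (by omega)) le_rfl)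
  have hVar : ∀ K ∈ m, Integrable (fun ω => (√(N K ω) - √(S K ω)) ^ 2) P
      ∧ ∫ ω, (√(N K ω) - √(S K ω)) ^ 2 ∂P ≤ 2 * Real.log (1 + n) + 2 := by
    intro K hK
    have hKm := hmmeas K hK
    refine integral_sq_sqrt_le F hF hFmono
      (fun i ω => K.indicator (fun _ => (1 : ℝ)) (X i ω, X (i + 1) ω))
      (fun i ω => secInt volume (fun p => s p.1 p.2) K (X i ω))
      (fun k => ?_) (fun k => (measurable_secInt hsm hKm).comp (hXF k k le_rfl))
      (fun k ω => ?_) (fun k ω => secInt_nonneg hs0 _ _)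
      (fun k ω => secInt_le_one hs hs0 hsi hs1 hKm _) (fun k hk => ?_)
    · exact (measurable_const.indicator hKm).comp
        ((hXF k (k + 1) (by omega)).prodMk (hXF (k + 1) (k + 1) le_rfl))
    · by_cases h : (X k ω, X (k + 1) ω) ∈ K <;> simp [h]
    · exact condExp_pair hs hs0 hsi hs1 (hF k) (hXF k k le_rfl) (hX (k + 1)) (hMarkov k hk) hKm
  have hVi : Integrable (fun ω => ∑ K ∈ m, (√(N K ω) - √(S K ω)) ^ 2) P :=
    integrable_finsetSum _ fun K hK => (hVar K hK).1
  have hRisk : ∫ ω, hellSq volume n X ω (A.indicator fun p => s p.1 p.2)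
        (histEst volume n X m ω) ∂P
      ≤ 4 * ∫ ω, H ω ∂P + (1 / n) * (m.card * (2 * Real.log (1 + n) + 2)) := by
    calc _ ≤ ∫ ω, (4 * H ω + (1 / n) * ∑ K ∈ m, (√(N K ω) - √(S K ω)) ^ 2) ∂P :=
          integral_mono_of_nonneg (.of_forall hell0) ((hHi.const_mul 4).add (hVi.const_mul _))
            (.of_forall hEst)
      _ = 4 * ∫ ω, H ω ∂P + (1 / n) * ∑ K ∈ m, ∫ ω, (√(N K ω) - √(S K ω)) ^ 2 ∂P := by
          rw [integral_add (hHi.const_mul 4) (hVi.const_mul _), integral_const_mul 4 H,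
            integral_const_mul (1 / (n : ℝ)) fun ω => ∑ K ∈ m, (√(N K ω) - √(S K ω)) ^ 2,
            integral_finsetSum _ fun K hK => (hVar K hK).1]
      _ ≤ _ := by
          refine add_le_add le_rfl (mul_le_mul_of_nonneg_left ?_ (by positivity))
          exact (Finset.sum_le_sum fun K hK => (hVar K hK).2).trans
            (by rw [Finset.sum_const, nsmul_eq_mul])
  simp_rw [hInf]
  have hlog2 : 0 ≤ Real.log 2 := Real.log_nonneg (by norm_num)
  have hC : 1 / (4 + Real.log 2) ≤ 1 / 4 := one_div_le_one_div_of_le (by norm_num) (by linarith)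
  have hlogn : Real.log (1 + n) ≤ 1 + Real.log n := by
    have h1 : Real.log (1 + n) ≤ Real.log (2 * n) :=
      Real.log_le_log (by linarith) (by
        have : (1 : ℝ) ≤ n := by exact_mod_cast (by omega : 1 ≤ n)
        linarith)
    rw [Real.log_mul (by norm_num) hn0.ne'] at h1
    have := Real.log_le_sub_one_of_pos (x := 2) (by norm_num)
    linarith
  have hlogn0 : 0 ≤ Real.log n := Real.log_natCast_nonneg n
  calc _ ≤ 1 / 4 * ∫ ω, hellSq volume n X ω (A.indicator fun p => s p.1 p.2)
        (histEst volume n X m ω) ∂P :=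
        mul_le_mul_of_nonneg_right hC (integral_nonneg hell0)
    _ ≤ 1 / 4 * (4 * ∫ ω, H ω ∂P + (1 / n) * (m.card * (4 * (1 + Real.log n)))) := by
        refine mul_le_mul_of_nonneg_left (hRisk.trans ?_) (by norm_num)
        gcongr
        linarith
    _ = _ := by field_simp
end
end
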